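/- arXiv:2405.12169 — 10 statements merged into one kernel-verified Lean document; each statement's English description precedes it below -/
import Mathlib

section
/- Let R be a commutative ring and S a faithfully flat commutative R-algebra. Then there exist: a nonempty partially ordered set ι in which every countable subset has an upper bound (an ω₁-directed poset); a directed system of commutative R-algebras (S_i)_{i∈ι} with R-algebra transition homomorphisms t_{ij} : S_i → S_j for i ≤ j satisfying t_{ii} = id and t_{jk} ∘ t_{ij} = t_{ik} for i ≤ j ≤ k; and R-algebra homomorphisms g_i : S_i → S with g_j ∘ t_{ij} = g_i, such that: (1) each S_i is a faithfully flat R-module; (2) each S_i is countably presented as an R-algebra, i.e., there exists a surjective R-algebra homomorphism from the polynomial algebra MvPolynomial ℕ R onto S_i whose kernel is a countably generated ideal; (3) every element of S lies in the range of some g_i; (4) for every i and all x, y ∈ S_i with g_i(x) = g_i(y), there exists j ≥ i with t_{ij}(x) = t_{ij}(y). (Every faithfully flat algebra is an ω₁-directed colimit of countably presented faithfully flat algebras; this is the paper's Proposition due to Scholze.) -/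
/-!
Every faithfully flat algebra over a commutative ring is an ω₁-directed colimit of
countably presented faithfully flat algebras (Scholze).
-/

universe u

/-- The data of a presentation of a faithfully flat `R`-algebra `S` as an `ω₁`-directed
colimit of countably presented faithfully flat `R`-algebras. -/
structure OmegaOneDirectedFFPresentation (R S : Type u) [CommRing R] [CommRing S]
    [Algebra R S] where
  /-- the index poset -/
  ι : Type u
  [partialOrder : PartialOrder ι]
  nonempty : Nonempty ι
  /-- the index poset is `ω₁`-directed: every countable subset has an upper bound -/
  countable_bddAbove : ∀ T : Set ι, T.Countable → ∃ ub : ι, ∀ i ∈ T, i ≤ ub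
  /-- the directed system of `R`-algebras -/
  obj : ι → Type u
  [commRing : ∀ i, CommRing (obj i)]
  [algebra : ∀ i, Algebra R (obj i)]
  /-- the transition homomorphisms -/
  t : ∀ {i j : ι}, i ≤ j → (obj i →ₐ[R] obj j)
  t_id : ∀ i : ι, t (le_refl i) = AlgHom.id R (obj i)
  t_comp : ∀ {i j k : ι} (hij : i ≤ j) (hjk : j ≤ k),
    (t hjk).comp (t hij) = t (hij.trans hjk)
  /-- the cocone homomorphisms to `S` -/
  g : ∀ i : ι, obj i →ₐ[R] S
  g_comp : ∀ {i j : ι} (hij : i ≤ j), (g j).comp (t hij) = g i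
  /-- (1) each term is faithfully flat as an `R`-module -/
  faithfullyFlat : ∀ i, Module.FaithfullyFlat R (obj i)
  /-- (2) each term is countably presented as an `R`-algebra -/
  countablyPresented : ∀ i, ∃ f : MvPolynomial ℕ R →ₐ[R] obj i,
    Function.Surjective f ∧
      ∃ gens : Set (MvPolynomial ℕ R), gens.Countable ∧ Ideal.span gens = RingHom.ker f
  /-- (3) every element of `S` lies in the range of some `g i` -/
  jointly_surjective : ∀ s : S, ∃ (i : ι) (x : obj i), g i x = s
  /-- (4) elements identified in `S` are identified at some later stage -/
  eventually_eq : ∀ (i : ι) (x y : obj i), g i x = g i y →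
    ∃ (j : ι) (hij : i ≤ j), t hij x = t hij y

open MvPolynomial

namespace OmegaFF

theorem exists_countable_closed {T : Type*} (Op : Finset T → Set T)
    (hOp : ∀ F, (Op F).Countable) (C0 : Set T) (h0 : C0.Countable) :
    ∃ C : Set T, C0 ⊆ C ∧ C.Countable ∧ ∀ F : Finset T, (F : Set T) ⊆ C → Op F ⊆ C := by
  classical
  let step : Set T → Set T := fun C => C ∪ ⋃ F ∈ {F : Finset T | (F : Set T) ⊆ C}, Op F
  let c : ℕ → Set T := fun n => step^[n] C0
  have hs : ∀ n, c (n + 1) = step (c n) := fun n => Function.iterate_succ_apply' step n C0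
  have hc : ∀ n, (c n).Countable := by
    intro n
    induction n with
    | zero => exact h0
    | succ n ih =>
      rw [hs]
      have h2 : {F : Finset T | (F : Set T) ⊆ c n}.Countable := by
        have h1 := Set.countable_ofPred_finite_subset ih
        refine (h1.preimage (f := fun F : Finset T => (F : Set T))
          Finset.coe_injective).mono ?_
        intro F hF
        exact And.intro F.finite_toSet hF
      exact ih.union (h2.biUnion fun F _ => hOp F)
  have hm : Monotone c := monotone_nat_of_le_succ fun n => by
    rw [hs]; exact Set.subset_union_left
  refine ⟨⋃ n, c n, Set.subset_iUnion c 0, Set.countable_iUnion hc, fun F hF => ?_⟩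
  obtain ⟨n, hn⟩ : ∃ n, (F : Set T) ⊆ c n :=
    (hm.directed_le).exists_mem_subset_of_finset_subset_biUnion hF
  refine Set.Subset.trans ?_ (Set.subset_iUnion c (n + 1))
  rw [hs]
  refine Set.Subset.trans ?_ Set.subset_union_right
  exact Set.subset_biUnion_of_mem (u := Op) (show F ∈ {F : Finset T | (F : Set T) ⊆ c n} from hn)

variable (R S : Type u) [CommRing R] [CommRing S] [Algebra R S]

/-- evaluation -/
noncomputable abbrev ev : MvPolynomial S R →ₐ[R] S := aeval id

/-- index type -/
abbrev T : Type u := (S →₀ ℕ) ⊕ RingHom.ker (ev R S)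

theorem key [Module.Flat R S] (F : Finset (S →₀ ℕ)) (G : Finset (RingHom.ker (ev R S))) :
    ∃ (k : ℕ) (a : MvPolynomial S R →ₗ[R] (Fin k →₀ R)) (y : Fin k → S),
      (∀ g ∈ G, a (g : MvPolynomial S R) = 0) ∧
      ∀ m ∈ F, ev R S (monomial m 1) = ∑ j, a (monomial m 1) j • y j := by
  classical
  let F' : Finset (S →₀ ℕ) := F ∪ G.biUnion fun g => (g : MvPolynomial S R).support
  let r : MvPolynomial S R →ₗ[R] (F' → R) := LinearMap.pi fun m => lcoeff R (m : S →₀ ℕ)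
  let x : (F' → R) →ₗ[R] S := Fintype.linearCombination R fun m : F' => ev R S (monomial m 1)
  have hxr : ∀ p : MvPolynomial S R, p.support ⊆ F' → x (r p) = ev R S p := by
    intro p hp
    have : x (r p) = ∑ m : F', p.coeff m • ev R S (monomial m 1) := by
      simp [x, r, Fintype.linearCombination_apply]
    rw [this, Finset.sum_coe_sort F' (fun m => p.coeff m • ev R S (monomial m 1))]
    conv_rhs => rw [p.as_sum]
    rw [map_sum]
    symm
    rw [Finset.sum_subset hp]
    · refine Finset.sum_congr rfl fun m _ => ?_
      rw [← map_smul, smul_monomial, smul_eq_mul, mul_one]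
    · intro m _ hm
      rw [notMem_support_iff.mp hm]; simp
  let f : (G → R) →ₗ[R] (F' → R) := Fintype.linearCombination R fun g : G => r (g : RingHom.ker (ev R S))
  have hxf : x ∘ₗ f = 0 := by
    ext g
    have hg : x (r (g : RingHom.ker (ev R S))) = 0 := by
      rw [hxr]
      · exact g.1.2
      · intro m hm
        exact Finset.mem_union_right _ (Finset.mem_biUnion.mpr ⟨g, g.2, hm⟩)
    simpa [f] using hg
  obtain ⟨k, a, y, hxy, haf⟩ := Module.Flat.exists_factorization_of_comp_eq_zero_of_free hxf
  refine ⟨k, a ∘ₗ r, fun j => y (Finsupp.single j 1), ?_, ?_⟩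
  · intro g hg
    have := LinearMap.congr_fun haf (Pi.single ⟨g, hg⟩ 1)
    simpa [f] using this
  · intro m hm
    rw [← hxr, hxy]
    · simp only [LinearMap.comp_apply]
      generalize a (r (monomial m 1)) = v
      conv_lhs => rw [← Finsupp.univ_sum_single v]
      simp only [map_sum, ← map_smul, Finsupp.smul_single, smul_eq_mul, mul_one]
    · intro m' hm'
      have := support_monomial_subset hm'
      rw [Finset.mem_singleton] at this
      subst this
      exact Finset.mem_union_left _ hm

variable {R S}

/-- multiplication of a relation by a monomial -/
noncomputable def mulK (m : S →₀ ℕ) (b : RingHom.ker (ev R S)) : RingHom.ker (ev R S) :=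
  ⟨monomial m (1 : R) * (b : MvPolynomial S R), Ideal.mul_mem_left _ _ b.2⟩

/-- the conditions making the stage flat -/
structure Closed (C : Set (T R S)) : Prop where
  zero : Sum.inl 0 ∈ C
  add : ∀ m m', Sum.inl m ∈ C → Sum.inl m' ∈ C → Sum.inl (m + m') ∈ C
  mul : ∀ m b, Sum.inl m ∈ C → Sum.inr b ∈ C →
    Sum.inr (mulK m b) ∈ C
  eq : ∀ (F : Finset (S →₀ ℕ)) (G : Finset (RingHom.ker (ev R S))),
    (∀ m ∈ F, Sum.inl m ∈ C) → (∀ b ∈ G, Sum.inr b ∈ C) →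
    ∃ (k : ℕ) (a : MvPolynomial S R →ₗ[R] (Fin k →₀ R)) (y : Fin k → S),
      (∀ g ∈ G, a (g : MvPolynomial S R) = 0) ∧
      (∀ j, Sum.inl (Finsupp.single (y j) 1) ∈ C) ∧
      ∀ m ∈ F, ∃ h, Sum.inr ⟨monomial m 1 - ∑ j, a (monomial m 1) j • X (y j), h⟩ ∈ C

theorem exists_closed [Module.Flat R S] (C0 : Set (T R S)) (h0 : C0.Countable) :
    ∃ C, C0 ⊆ C ∧ C.Countable ∧ Closed C := by
  classical
  choose k a y hG hF using key R S
  have hker : ∀ F G, ∀ m ∈ F,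
      monomial m 1 - ∑ j, a F G (monomial m 1) j • X (y F G j) ∈ RingHom.ker (ev R S) := by
    intro F G m hm
    rw [RingHom.mem_ker, map_sub, hF F G m hm]
    simp [map_sum]
  let Op1 : Finset (S →₀ ℕ) → Finset (RingHom.ker (ev R S)) → Set (T R S) := fun F G =>
    (({Sum.inl 0} ∪ (Set.image2 (fun m m' => Sum.inl (m + m')) (F : Set (S →₀ ℕ)) (F : Set (S →₀ ℕ)))) ∪
    (Set.image2 (fun m (b : RingHom.ker (ev R S)) =>
      Sum.inr (mulK m b)
      ) (F : Set (S →₀ ℕ)) (G : Set (RingHom.ker (ev R S))))) ∪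
    ((Set.range fun j => Sum.inl (Finsupp.single (y F G j) 1)) ∪
    Set.range fun m : F => Sum.inr ⟨_, hker F G m m.2⟩)
  let Op : Finset (T R S) → Set (T R S) := fun U => Op1 U.toLeft U.toRight
  have hOp : ∀ U, (Op U).Countable := by
    intro U
    refine (((Set.countable_singleton _).union ?_).union ?_).union
      ((Set.countable_range _).union (Set.countable_range _))
    · exact (Finset.countable_toSet _).image2 (Finset.countable_toSet _) _
    · exact (Finset.countable_toSet _).image2 (Finset.countable_toSet _) _
  obtain ⟨C, h1, h2, h3⟩ := exists_countable_closed Op hOp C0 h0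
  have h4 : ∀ (F : Finset (S →₀ ℕ)) (G : Finset (RingHom.ker (ev R S))),
    (∀ m ∈ F, Sum.inl m ∈ C) → (∀ b ∈ G, Sum.inr b ∈ C) → Op1 F G ⊆ C := by
    intro F G hF hG
    have h6 : Op1 (F.disjSum G).toLeft (F.disjSum G).toRight ⊆ C := h3 (F.disjSum G) ?_
    · rwa [Finset.toLeft_disjSum, Finset.toRight_disjSum] at h6
    intro t ht
    rcases t with m | b
    · exact hF m (by simpa using ht)
    · exact hG b (by simpa using ht)
  refine ⟨C, h1, h2, ?_, ?_, ?_, ?_⟩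
  · exact h4 ∅ ∅ (by simp) (by simp) (Or.inl (Or.inl (Or.inl rfl)))
  · intro m m' hm hm'
    refine h4 {m, m'} ∅ (by simp [hm, hm']) (by simp) (Or.inl (Or.inl (Or.inr ?_)))
    exact ⟨m, by simp, m', by simp, rfl⟩
  · intro m b hm hb
    refine h4 {m} {b} (by simp [hm]) (by simp [hb]) (Or.inl (Or.inr ?_))
    exact ⟨m, by simp, b, by simp, rfl⟩
  · intro F G hF' hG'
    have h5 := h4 F G hF' hG'
    refine ⟨k F G, a F G, y F G, hG F G, ?_, ?_⟩
    · intro j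
      apply h5
      refine Or.inr (Or.inl ?_)
      exact ⟨j, rfl⟩
    · intro m hm
      refine ⟨hker F G m hm, h5 (Or.inr (Or.inr ?_))⟩
      exact ⟨⟨m, hm⟩, rfl⟩

/-- generators -/
def gen (C : Set (T R S)) : Set S := {s | Sum.inl (Finsupp.single s 1) ∈ C}

/-- relations -/
def rel (C : Set (T R S)) : Set (MvPolynomial (gen C) R) :=
  {p | ∃ h, Sum.inr ⟨rename Subtype.val p, h⟩ ∈ C}

/-- the stage -/
abbrev Obj (C : Set (T R S)) : Type u := MvPolynomial (gen C) R ⧸ Ideal.span (rel C)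

theorem gen_mono {C D : Set (T R S)} (h : C ⊆ D) : gen C ⊆ gen D := fun _ hs => h hs

/-- transition -/
noncomputable def tr {C D : Set (T R S)} (h : C ⊆ D) : Obj C →ₐ[R] Obj D :=
  Ideal.quotientMapₐ _ (rename (Set.inclusion (gen_mono h))) (by
    rw [Ideal.span_le]
    rintro p ⟨hp, hpC⟩
    refine Ideal.subset_span ?_
    have : rename Subtype.val (rename (Set.inclusion (gen_mono h)) p) = rename Subtype.val p := by
      rw [rename_rename]; rfl
    refine ⟨by rw [this]; exact hp, ?_⟩
    simp only [this]
    exact h hpC)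

theorem tr_mk {C D : Set (T R S)} (h : C ⊆ D) (p : MvPolynomial (gen C) R) :
    tr h (Ideal.Quotient.mk _ p) = Ideal.Quotient.mk _ (rename (Set.inclusion (gen_mono h)) p) := rfl

/-- cocone -/
noncomputable def toS (C : Set (T R S)) : Obj C →ₐ[R] S :=
  Ideal.Quotient.liftₐ _ ((ev R S).comp (rename Subtype.val)) (by
    intro a ha
    have : Ideal.span (rel C) ≤ RingHom.ker ((ev R S).comp (rename Subtype.val)) := by
      rw [Ideal.span_le]
      rintro p ⟨hp, -⟩
      exact hp
    exact this ha)

theorem toS_mk (C : Set (T R S)) (p : MvPolynomial (gen C) R) :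
    toS C (Ideal.Quotient.mk _ p) = ev R S (rename Subtype.val p) := rfl

theorem Closed.mem_left {C : Set (T R S)} (hC : Closed C) (m : gen C →₀ ℕ) :
    Sum.inl (m.mapDomain Subtype.val) ∈ C := by
  induction m using Finsupp.induction_linear with
  | zero => simpa using hC.zero
  | add f g hf hg => rw [Finsupp.mapDomain_add]; exact hC.add _ _ hf hg
  | single s n =>
    rw [Finsupp.mapDomain_single]
    induction n with
    | zero => simpa using hC.zero
    | succ n ih => rw [Finsupp.single_add]; exact hC.add _ _ ih s.2

theorem Closed.mem_span {C : Set (T R S)} (hC : Closed C) (p : MvPolynomial (gen C) R)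
    (hp : p ∈ Ideal.span (rel C)) : p ∈ Submodule.span R (rel C) := by
  have hmul : ∀ q : MvPolynomial (gen C) R, ∀ p ∈ Submodule.span R (rel C),
      q * p ∈ Submodule.span R (rel C) := by
    intro q p hp
    induction hp using Submodule.span_induction with
    | zero => simp
    | add x y _ _ hx hy => rw [mul_add]; exact add_mem hx hy
    | smul r x _ hx => rw [mul_smul_comm]; exact Submodule.smul_mem _ _ hx
    | mem p hp =>
      obtain ⟨hk, hp⟩ := hp
      rw [q.as_sum, Finset.sum_mul]
      refine sum_mem fun m _ => ?_
      have : monomial m (coeff m q) * p = coeff m q • (monomial m 1 * p) := by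
        rw [← smul_mul_assoc, smul_monomial, smul_eq_mul, mul_one]
      rw [this]
      refine Submodule.smul_mem _ _ (Submodule.subset_span ?_)
      have h1 := hC.mul _ _ (hC.mem_left m) hp
      have h2 : rename Subtype.val (monomial m 1 * p) =
          monomial (m.mapDomain Subtype.val) (1 : R) * rename Subtype.val p := by
        rw [map_mul, rename_monomial]
      refine ⟨by rw [h2]; exact Ideal.mul_mem_left _ _ hk, ?_⟩
      simp only [h2]
      exact h1
  induction hp using Submodule.span_induction with
  | zero => simp
  | add x y _ _ hx hy => exact add_mem hx hy
  | smul r x _ hx => exact hmul _ _ hx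
  | mem p hp => exact Submodule.subset_span hp

theorem Closed.flat {C : Set (T R S)} (hC : Closed C) : Module.Flat R (Obj C) := by
  classical
  refine Module.Flat.of_forall_isTrivialRelation ?_
  intro l f x hfx
  choose p hp using fun i => Ideal.Quotient.mk_surjective (x i)
  have hq : ∑ i, f i • p i ∈ Ideal.span (rel C) := by
    rw [← Ideal.Quotient.eq_zero_iff_mem, ← hfx, map_sum]
    refine Finset.sum_congr rfl fun i _ => ?_
    rw [← hp]; rfl
  obtain ⟨G0, hG0, hqG⟩ := Submodule.mem_span_finite_of_mem_span (hC.mem_span _ hq)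
  let G : Finset (RingHom.ker (ev R S)) := G0.attach.image fun g =>
    ⟨rename Subtype.val g.1, (hG0 g.2).1⟩
  let F : Finset (S →₀ ℕ) := Finset.univ.biUnion fun i =>
    (p i).support.image (Finsupp.mapDomain Subtype.val)
  obtain ⟨k, a, y, ha, hy, hm⟩ := hC.eq F G
    (by
      intro m hm
      simp only [F, Finset.mem_biUnion, Finset.mem_image] at hm
      obtain ⟨i, -, m, -, rfl⟩ := hm
      exact hC.mem_left m)
    (by
      intro b hb
      simp only [G, Finset.mem_image] at hb
      obtain ⟨g, -, rfl⟩ := hb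
      exact (hG0 g.2).2)
  refine ⟨k, fun i j => a (rename Subtype.val (p i)) j,
    fun j => Ideal.Quotient.mk _ (X ⟨y j, hy j⟩), ?_, ?_⟩
  · intro i
    have hmon : ∀ m ∈ (p i).support, Ideal.Quotient.mkₐ R (Ideal.span (rel C)) (monomial m 1) =
        ∑ j, a (rename Subtype.val (monomial m 1)) j •
          Ideal.Quotient.mkₐ R (Ideal.span (rel C)) (X ⟨y j, hy j⟩) := by
      intro m hmi
      obtain ⟨h, hmem⟩ := hm (m.mapDomain Subtype.val)
        (Finset.mem_biUnion.mpr ⟨i, Finset.mem_univ _, Finset.mem_image_of_mem _ hmi⟩)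
      simp only [← map_smul, ← map_sum]
      rw [← sub_eq_zero, ← map_sub]
      refine Ideal.Quotient.eq_zero_iff_mem.mpr (Ideal.subset_span ?_)
      have e : rename Subtype.val (monomial m (1 : R) -
          ∑ j, a (rename Subtype.val (monomial m 1)) j • X (⟨y j, hy j⟩ : gen C)) =
          monomial (m.mapDomain Subtype.val) 1 -
            ∑ j, a (monomial (m.mapDomain Subtype.val) 1) j • X (y j) := by
        simp [map_sum, rename_monomial]
      refine ⟨by rw [e]; exact h, ?_⟩
      simp only [e]
      exact hmem
    have hpi : p i = ∑ m ∈ (p i).support, (p i).coeff m • monomial m (1 : R) := by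
      conv_lhs => rw [(p i).as_sum]
      simp [smul_monomial]
    rw [← hp]
    change Ideal.Quotient.mkₐ R (Ideal.span (rel C)) (p i) = ∑ j, a (rename Subtype.val (p i)) j •
          Ideal.Quotient.mkₐ R (Ideal.span (rel C)) (X ⟨y j, hy j⟩)
    conv_lhs => rw [hpi]
    have e2 : ∀ j, a (rename Subtype.val (p i)) j =
        ∑ m ∈ (p i).support, (p i).coeff m * a (rename Subtype.val (monomial m 1)) j := by
      intro j
      conv_lhs => rw [hpi]
      simp only [map_sum, map_smul, Finsupp.finsetSum_apply, Finsupp.smul_apply, smul_eq_mul]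
    simp only [e2, map_sum, map_smul, Finset.sum_smul]
    rw [Finset.sum_comm]
    refine Finset.sum_congr rfl fun m hm => ?_
    rw [hmon m hm, Finset.smul_sum]
    simp only [mul_smul]
  · intro j
    have hz : ∀ q ∈ Submodule.span R (G0 : Set (MvPolynomial (gen C) R)),
        a (rename Subtype.val q) = 0 := by
      intro q hq
      have : Submodule.span R (G0 : Set (MvPolynomial (gen C) R)) ≤
          LinearMap.ker (a ∘ₗ (rename Subtype.val : _ →ₐ[R] MvPolynomial S R).toLinearMap) := by
        rw [Submodule.span_le]
        intro g hg
        exact ha ⟨rename Subtype.val g, (hG0 hg).1⟩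
          (Finset.mem_image.mpr ⟨⟨g, hg⟩, Finset.mem_attach _ _, rfl⟩)
      exact this hq
    have := DFunLike.congr_fun (hz _ hqG) j
    simpa [map_sum] using this

theorem Closed.faithfullyFlat [Module.FaithfullyFlat R S] {C : Set (T R S)} (hC : Closed C) :
    Module.FaithfullyFlat R (Obj C) := by
  have := hC.flat
  refine ⟨fun m hm h => ?_⟩
  rw [Ideal.smul_top_eq_map, Submodule.restrictScalars_eq_top_iff] at h
  have h2 : (m.map (algebraMap R (Obj C))).map (toS C).toRingHom = m.map (algebraMap R S) := by
    rw [Ideal.map_map]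
    congr 1
    exact (toS C).comp_algebraMap
  rw [h, Ideal.map_top] at h2
  have h3 := Ideal.comap_map_eq_self_of_faithfullyFlat (B := S) m
  rw [← h2, Ideal.comap_top] at h3
  exact hm.ne_top h3.symm

theorem countablyPresented (C : Set (T R S)) (hC : C.Countable) :
    ∃ f : MvPolynomial ℕ R →ₐ[R] Obj C, Function.Surjective f ∧
      ∃ gens : Set (MvPolynomial ℕ R), gens.Countable ∧ Ideal.span gens = RingHom.ker f := by
  classical
  have hA : (gen C).Countable := hC.preimage
    (f := fun s : S => (Sum.inl (Finsupp.single s 1) : T R S))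
    (Sum.inl_injective.comp (Finsupp.single_left_injective one_ne_zero))
  have hB : (rel C).Countable := by
    have h1 : (Subtype.val '' (Sum.inr ⁻¹' C : Set (RingHom.ker (ev R S)))).Countable :=
      (hC.preimage Sum.inr_injective).image _
    refine (h1.preimage (f := rename (R := R) (Subtype.val : gen C → S))
      (rename_injective _ Subtype.val_injective)).mono ?_
    rintro p ⟨h, hp⟩
    exact ⟨_, hp, rfl⟩
  have : Countable (gen C) := hA
  obtain ⟨e, he⟩ := exists_injective_nat (gen C)
  let σ : MvPolynomial (gen C) R →ₐ[R] MvPolynomial ℕ R := rename e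
  let h : MvPolynomial ℕ R →ₐ[R] MvPolynomial (gen C) R := killCompl he
  have hσ : ∀ p, h (σ p) = p := fun p => killCompl_rename_app he p
  refine ⟨(Ideal.Quotient.mkₐ R _).comp h, ?_, ?_⟩
  · exact (Ideal.Quotient.mkₐ_surjective R _).comp fun p => ⟨σ p, hσ p⟩
  · refine ⟨(Set.range fun n => X n - σ (h (X n))) ∪ σ '' rel C,
      (Set.countable_range _).union (hB.image _), ?_⟩
    apply le_antisymm
    · rw [Ideal.span_le]
      rintro p (⟨n, rfl⟩ | ⟨q, hq, rfl⟩)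
      · simp [RingHom.mem_ker, hσ]
      · have : Ideal.Quotient.mk (Ideal.span (rel C)) q = 0 :=
          Ideal.Quotient.eq_zero_iff_mem.mpr (Ideal.subset_span hq)
        simpa [RingHom.mem_ker, hσ] using this
    · intro p hp
      rw [Ideal.span_union]
      have h1 : p - σ (h p) ∈ Ideal.span (Set.range fun n => (X n : MvPolynomial ℕ R) - σ (h (X n))) := by
        have : Ideal.Quotient.mkₐ R (Ideal.span
            (Set.range fun n => (X n : MvPolynomial ℕ R) - σ (h (X n)))) =
            (Ideal.Quotient.mkₐ R _).comp (σ.comp h) := by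
          apply MvPolynomial.algHom_ext
          intro n
          refine Ideal.Quotient.eq.mpr (Ideal.subset_span ⟨n, rfl⟩)
        exact Ideal.Quotient.eq.mp (DFunLike.congr_fun this p)
      have h2 : σ (h p) ∈ Ideal.span (σ '' rel C) := by
        have h3 : h p ∈ Ideal.span (rel C) := Ideal.Quotient.eq_zero_iff_mem.mp hp
        have h4 := Ideal.mem_map_of_mem σ h3
        rwa [Ideal.map_span] at h4
      have := Submodule.add_mem_sup h1 h2
      rwa [sub_add_cancel] at this

end OmegaFF

open OmegaFF in
/-- Every faithfully flat algebra over a commutative ring is an `ω₁`-directed colimit of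
countably presented faithfully flat algebras. -/
theorem exists_omegaOneDirected_presentation_of_faithfullyFlat
    (R S : Type u) [CommRing R] [CommRing S] [Algebra R S]
    (hS : Module.FaithfullyFlat R S) :
    Nonempty (OmegaOneDirectedFFPresentation R S) := by
  refine ⟨{
    ι := {C : Set (T R S) // C.Countable ∧ Closed C}
    nonempty := ?_
    countable_bddAbove := ?_
    obj := fun C => Obj C.1
    t := fun h => tr h
    t_id := ?_
    t_comp := ?_
    g := fun C => toS C.1
    g_comp := ?_
    faithfullyFlat := fun C => C.2.2.faithfullyFlat
    countablyPresented := fun C => countablyPresented C.1 C.2.1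
    jointly_surjective := ?_
    eventually_eq := ?_ }⟩
  · obtain ⟨C, -, h⟩ := exists_closed (∅ : Set (T R S)) Set.countable_empty
    exact ⟨C, h⟩
  · intro U hU
    obtain ⟨C, h0, h⟩ := exists_closed (⋃ i ∈ U, i.1) (hU.biUnion fun i _ => i.2.1)
    exact ⟨⟨C, h⟩, fun i hi => (Set.subset_biUnion_of_mem (u := fun i => i.1) hi).trans h0⟩
  · intro C
    apply AlgHom.ext
    intro x
    obtain ⟨p, rfl⟩ := Ideal.Quotient.mk_surjective x
    rw [tr_mk]
    change Ideal.Quotient.mk _ (rename id p) = Ideal.Quotient.mk _ p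
    rw [rename_id_apply]
  · intro C D E h1 h2
    apply AlgHom.ext
    intro x
    obtain ⟨p, rfl⟩ := Ideal.Quotient.mk_surjective x
    rw [AlgHom.comp_apply, tr_mk, tr_mk, tr_mk, rename_rename]
    rfl
  · intro C D h
    apply AlgHom.ext
    intro x
    obtain ⟨p, rfl⟩ := Ideal.Quotient.mk_surjective x
    rw [AlgHom.comp_apply, tr_mk, toS_mk, toS_mk, rename_rename]
    rfl
  · intro s
    obtain ⟨C, h0, h⟩ := exists_closed ({Sum.inl (Finsupp.single s 1)} : Set (T R S))
      (Set.countable_singleton _)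
    refine ⟨⟨C, h⟩, Ideal.Quotient.mk _ (X ⟨s, h0 rfl⟩), ?_⟩
    rw [toS_mk]
    simp
  · intro D x y hxy
    obtain ⟨p, rfl⟩ := Ideal.Quotient.mk_surjective x
    obtain ⟨q, rfl⟩ := Ideal.Quotient.mk_surjective y
    rw [toS_mk, toS_mk] at hxy
    have hk : rename Subtype.val (p - q) ∈ RingHom.ker (ev R S) := by
      rw [RingHom.mem_ker, map_sub, map_sub, hxy, sub_self]
    obtain ⟨C, h0, h⟩ := exists_closed (D.1 ∪ {Sum.inr ⟨_, hk⟩}) (D.2.1.union (Set.countable_singleton _))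
    have hDC : D.1 ⊆ C := Set.subset_union_left.trans h0
    refine ⟨⟨C, h⟩, hDC, ?_⟩
    rw [tr_mk, tr_mk, Ideal.Quotient.eq, ← map_sub]
    refine Ideal.subset_span ?_
    have e : rename Subtype.val (rename (Set.inclusion (gen_mono hDC)) (p - q)) =
        rename Subtype.val (p - q) := by
      rw [rename_rename]; rfl
    refine ⟨by rw [e]; exact hk, ?_⟩
    simp only [e]
    exact h0 (Or.inr rfl)
end

section
/- Let R be a commutative noetherian local ring with maximal ideal 𝔪, let I be an injective R-module together with an injective R-linear map R⧸𝔪 → I, and let N be an R-module that is not finitely generated. Then there exists an R-linear map g : N → ⨁_{n∈ℕ} I (the direct sum of countably many copies of I) whose range is not contained in the submodule ⨁_{n∈s} I for any finite subset s ⊆ ℕ; equivalently, g does not factor through the inclusion of any finite sub-direct-sum. -/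
open DirectSum

universe u

theorem aux_sep (R : Type u) [CommRing R] [IsLocalRing R]
    (I : Type u) [AddCommGroup I] [Module R I] [Module.Injective R I]
    (e : (R ⧸ IsLocalRing.maximalIdeal R) →ₗ[R] I) (he : Function.Injective e)
    (N : Type u) [AddCommGroup N] [Module R N] (K : Submodule R N) (x : N) (hx : x ∉ K) :
    ∃ f : N →ₗ[R] I, (∀ y ∈ K, f y = 0) ∧ f x ≠ 0 := by
  let t : R →ₗ[R] (N ⧸ K) := LinearMap.toSpanSingleton R (N ⧸ K) (K.mkQ x)
  have hle : LinearMap.ker t ≤ IsLocalRing.maximalIdeal R := by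
    apply IsLocalRing.le_maximalIdeal
    intro h
    have h1 : (1 : R) ∈ LinearMap.ker t := by rw [h]; trivial
    simp [t] at h1
    exact hx h1
  let i : (R ⧸ LinearMap.ker t) →ₗ[R] (N ⧸ K) := (LinearMap.ker t).liftQ t le_rfl
  have hi : Function.Injective i := by
    rw [← LinearMap.ker_eq_bot]
    exact Submodule.ker_liftQ_eq_bot _ _ _ le_rfl
  let p : (R ⧸ LinearMap.ker t) →ₗ[R] (R ⧸ IsLocalRing.maximalIdeal R) :=
    (LinearMap.ker t).liftQ (Submodule.mkQ (IsLocalRing.maximalIdeal R)) (by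
      rw [Submodule.ker_mkQ]; exact hle)
  obtain ⟨h, hh⟩ := Module.Injective.out i hi (e ∘ₗ p)
  refine ⟨h ∘ₗ K.mkQ, fun y hy => ?_, ?_⟩
  · have : K.mkQ y = 0 := by simpa using hy
    rw [LinearMap.comp_apply, this, map_zero]
  · have h1 := hh (Submodule.Quotient.mk 1)
    have h2 : i (Submodule.Quotient.mk 1) = K.mkQ x := (one_smul R (K.mkQ x))
    rw [h2] at h1
    rw [LinearMap.comp_apply, h1, LinearMap.comp_apply]
    intro h0
    have h3 := he (h0.trans (map_zero e).symm)
    have h4 : (1 : R) ∈ IsLocalRing.maximalIdeal R := by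
      rw [← Submodule.Quotient.mk_eq_zero]
      exact h3
    exact (Ideal.ne_top_iff_one _).1 (IsLocalRing.maximalIdeal.isMaximal R).ne_top h4

theorem aux_sum (R : Type u) [CommRing R] (I : Type u) [AddCommGroup I] [Module R I]
    (s : Finset ℕ) (f : ℕ → I) (hf : ∀ n ∉ s, f n = 0) (n : ℕ) :
    (∑ k ∈ s, DirectSum.lof R ℕ (fun _ => I) k (f k)) n = f n := by
  rw [DirectSum.sum_apply]
  by_cases hn : n ∈ s
  · rw [Finset.sum_eq_single n]
    · exact DirectSum.lof_apply (M := fun _ : ℕ => I) R n (f n)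
    · intro b _ hb
      exact DirectSum.of_eq_of_ne _ _ _ hb.symm
    · exact fun h => absurd hn h
  · rw [hf n hn]
    refine Finset.sum_eq_zero fun b hb => DirectSum.of_eq_of_ne _ _ _ ?_
    rintro rfl; exact hn hb

theorem aux_inj (R : Type u) [CommRing R] [IsNoetherianRing R]
    (I : Type u) [AddCommGroup I] [Module R I] [Module.Injective R I] :
    Module.Injective R (⨁ _ : ℕ, I) := by
  classical
  apply Module.Baer.injective
  intro J g
  have hI : Module.Baer R I := Module.Baer.of_injective inferInstance
  choose G hG using fun n => hI J (DirectSum.component R ℕ (fun _ => I) n ∘ₗ g)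
  obtain ⟨T, hT⟩ := (Module.Finite.fg_top : (⊤ : Submodule R J).FG)
  let s : Finset ℕ := T.biUnion fun t => DFinsupp.support (g t)
  have hs : ∀ n ∉ s, DirectSum.component R ℕ (fun _ => I) n ∘ₗ g = 0 := by
    intro n hn
    apply LinearMap.ext_on hT
    intro t ht
    by_contra h
    exact hn (Finset.mem_biUnion.2 ⟨t, ht, DFinsupp.mem_support_iff.2 h⟩)
  refine ⟨∑ k ∈ s, DirectSum.lof R ℕ (fun _ => I) k ∘ₗ G k, fun x hx => ?_⟩
  apply DFinsupp.ext
  intro n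
  rw [LinearMap.sum_apply]
  refine (aux_sum R I s (fun k => G k x) (fun n hn => ?_) n).trans (hG n x hx)
  rw [hG n x hx, hs n hn]; rfl

theorem exists_linearMap_to_directSum_not_factoring
    (R : Type u) [CommRing R] [IsNoetherianRing R] [IsLocalRing R]
    (I : Type u) [AddCommGroup I] [Module R I] [Module.Injective R I]
    (e : (R ⧸ IsLocalRing.maximalIdeal R) →ₗ[R] I) (he : Function.Injective e)
    (N : Type u) [AddCommGroup N] [Module R N] (hN : ¬ Module.Finite R N) :
    ∃ g : N →ₗ[R] ⨁ _ : ℕ, I,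
      ∀ s : Finset ℕ, ¬ (∀ (x : N) (n : ℕ), n ∉ s → g x n = 0) := by
  haveI : Nonempty {K : Submodule R N // K.FG} := ⟨⟨⊥, Submodule.fg_bot⟩⟩
  haveI : NoMaxOrder {K : Submodule R N // K.FG} := ⟨by
    rintro ⟨K, hK⟩
    have hKt : ∃ x, x ∉ K := by
      by_contra! h
      exact hN ⟨(Submodule.eq_top_iff'.2 h) ▸ hK⟩
    obtain ⟨x, hx⟩ := hKt
    refine ⟨⟨K ⊔ Submodule.span R {x}, hK.sup (Submodule.fg_span_singleton x)⟩, ?_⟩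
    rw [← Subtype.coe_lt_coe]
    refine lt_of_le_of_ne le_sup_left fun h => hx ?_
    have h' : K = K ⊔ Submodule.span R {x} := h
    rw [h']
    exact Submodule.mem_sup_right (Submodule.mem_span_singleton_self x)⟩
  obtain ⟨L, hL⟩ := Nat.exists_strictMono {K : Submodule R N // K.FG}
  let K : ℕ → Submodule R N := fun n => (L n).1
  have hK : StrictMono K := fun a b h => hL h
  choose x hx hx' using fun n => SetLike.exists_of_lt (hK (Nat.lt_succ_self n))
  choose f hf hf' using fun n => aux_sep R I e he N (K n) (x n) (hx' n)
  let N' : Submodule R N := ⨆ n, K n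
  have hd : ∀ y : N', ∃ d : ⨁ _ : ℕ, I, ∀ n, d n = f n y := by
    rintro ⟨y, hy⟩
    obtain ⟨m, hm⟩ := (Submodule.mem_iSup_of_directed K hK.monotone.directed_le).1 hy
    refine ⟨_, aux_sum R I (Finset.range m) (fun n => f n y) fun n hn => ?_⟩
    exact hf n y (hK.monotone (by simpa using hn) hm)
  choose d hd using hd
  let g0 : N' →ₗ[R] ⨁ _ : ℕ, I :=
    { toFun := d
      map_add' := fun a b => DFinsupp.ext fun n => by
        rw [hd]
        exact (by simp : f n ((a + b : N') : N) = f n a + f n b).trans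
          (by rw [← hd, ← hd]; rfl)
      map_smul' := fun r a => DFinsupp.ext fun n => by
        rw [hd]
        exact (by simp : f n ((r • a : N') : N) = r • f n a).trans
          (by rw [← hd]; rfl) }
  haveI := aux_inj R I
  obtain ⟨g, hg⟩ := Module.Injective.out N'.subtype N'.injective_subtype g0
  refine ⟨g, fun s hs => ?_⟩
  obtain ⟨n, hn⟩ := Infinite.exists_notMem_finset s
  have hxn : x n ∈ N' := Submodule.mem_iSup_of_mem (n + 1) (hx n)
  have h1 := hs (x n) n hn
  have h2 : g (x n) = d ⟨x n, hxn⟩ := hg ⟨x n, hxn⟩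
  rw [h2, hd] at h1
  exact hf' n h1
end

section
/- Let ι be a type and for each i ∈ ι let X_i be a profinite topological space (compact, Hausdorff, and totally disconnected). Then the Stone–Čech compactification of the disjoint union Σ_{i∈ι} X_i (the sigma type with the disjoint-union topology) is totally disconnected. (Consequently, the inclusion of profinite sets into compact Hausdorff spaces preserves coproducts.) -/
universe u

theorem totallyDisconnected_stoneCech_sigma_of_profinite
    {ι : Type u} (X : ι → Type u) [∀ i, TopologicalSpace (X i)]
    [∀ i, CompactSpace (X i)] [∀ i, T2Space (X i)]
    [∀ i, TotallyDisconnectedSpace (X i)] :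
    TotallyDisconnectedSpace (StoneCech (Σ i, X i)) := by
  suffices h : TotallySeparatedSpace (StoneCech (Σ i, X i)) from inferInstance
  rw [totallySeparatedSpace_iff_exists_isClopen]
  intro x y hxy
  obtain ⟨U, hxU, hU, V, hyV, hV, hUV⟩ := exists_open_nhds_disjoint_closure hxy
  have hcont (i : ι) : Continuous fun z : X i => stoneCechUnit (⟨i, z⟩ : Σ i, X i) :=
    continuous_stoneCechUnit.comp continuous_sigmaMk
  have key (i : ι) : ∃ C : Set (X i), IsClopen C ∧
      (fun z : X i => stoneCechUnit (⟨i, z⟩ : Σ i, X i)) ⁻¹' closure U ⊆ C ∧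
      C ⊆ ((fun z : X i => stoneCechUnit (⟨i, z⟩ : Σ i, X i)) ⁻¹' closure V)ᶜ :=
    exists_clopen_of_closed_subset_open (isClosed_closure.preimage (hcont i))
      (isClosed_closure.preimage (hcont i)).isOpen_compl
      (fun z hz hz' => Set.disjoint_left.1 hUV hz hz')
  choose C hC hUC hCV using key
  let S : Set (Σ i, X i) := {p | p.2 ∈ C p.1}
  have hS : IsClopen S := ⟨isClosed_sigma_iff.2 fun i => (hC i).1,
    isOpen_sigma_iff.2 fun i => (hC i).2⟩
  have hg : Continuous S.boolIndicator := (continuous_boolIndicator_iff_isClopen S).2 hS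
  have hext := continuous_stoneCechExtend hg
  have hcl (b : Bool) : IsClopen (stoneCechExtend hg ⁻¹' {b}) :=
    (isClopen_discrete {b}).preimage hext
  have hpt (W : Set (StoneCech (Σ i, X i))) (hW : IsOpen W) (w) (hw : w ∈ W) (b : Bool)
      (h : ∀ p, stoneCechUnit p ∈ W → S.boolIndicator p = b) : stoneCechExtend hg w = b := by
    by_contra hne
    obtain ⟨p, hp1, hp2⟩ := denseRange_stoneCechUnit.exists_mem_open
      (hW.inter (hcl b).compl.isOpen) ⟨w, hw, hne⟩
    apply hp2
    simp only [Set.mem_preimage, Set.mem_singleton_iff, stoneCechExtend_stoneCechUnit]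
    exact h p hp1
  refine ⟨_, hcl true, hpt U hU x hxU true ?_, ?_⟩
  · intro p hp
    exact (S.mem_iff_boolIndicator p).1 (hUC p.1 (subset_closure hp))
  · have := hpt V hV y hyV false fun p hp =>
      (S.notMem_iff_boolIndicator p).1 fun hpS => hCV p.1 hpS (subset_closure hp)
    simp [this]
end

section
/- Let ι be a type, for each i ∈ ι let X_i be a profinite topological space, and let Y = Σ_{i∈ι} X_i with the disjoint-union topology. Let f : Y → ℝ be a continuous function which is bounded, say |f(y)| ≤ C for all y ∈ Y. Then for every ε > 0 there exists a locally constant function g : Y → ℝ taking only finitely many values such that |f(y) − g(y)| ≤ ε for all y ∈ Y. -/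
universe u

theorem exists_locallyConstant_approx_on_sigma_of_profinite
    {ι : Type u} (X : ι → Type u) [∀ i, TopologicalSpace (X i)]
    [∀ i, CompactSpace (X i)] [∀ i, T2Space (X i)]
    [∀ i, TotallyDisconnectedSpace (X i)]
    (f : (Σ i, X i) → ℝ) (hf : Continuous f)
    (C : ℝ) (hC : ∀ y : Σ i, X i, |f y| ≤ C)
    {ε : ℝ} (hε : 0 < ε) :
    ∃ g : (Σ i, X i) → ℝ, IsLocallyConstant g ∧ (Set.range g).Finite ∧
      ∀ y : Σ i, X i, |f y - g y| ≤ ε := by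
  classical
  obtain ⟨δ, hδ, rfl⟩ : ∃ δ : ℝ, 0 < δ ∧ ε = 2 * δ := ⟨ε / 2, by positivity, by ring⟩
  have key : ∀ a b : ℝ, a < b → ∃ U : Set (Σ i, X i), IsClopen U ∧
      (∀ y, b ≤ f y → y ∈ U) ∧ (∀ y ∈ U, a < f y) := by
    intro a b hab
    have h1 : ∀ i, ∃ V : Set (X i), IsClopen V ∧ {x | b ≤ f ⟨i, x⟩} ⊆ V ∧
        V ⊆ {x | a < f ⟨i, x⟩} := by
      intro i
      have hfi : Continuous fun x : X i => f ⟨i, x⟩ := hf.comp continuous_sigmaMk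
      exact exists_clopen_of_closed_subset_open (isClosed_le continuous_const hfi)
        (isOpen_lt continuous_const hfi) (fun x hx => lt_of_lt_of_le hab hx)
    choose V hV hbV hVa using h1
    refine ⟨{y | y.2 ∈ V y.1}, ⟨?_, ?_⟩, ?_, ?_⟩
    · exact isClosed_sigma_iff.2 fun i => (hV i).1
    · exact isOpen_sigma_iff.2 fun i => (hV i).2
    · rintro ⟨i, x⟩ h
      exact hbV i h
    · rintro ⟨i, x⟩ h
      exact hVa i h
  obtain ⟨N, hN⟩ := exists_nat_gt (2 * C / δ)
  rw [div_lt_iff₀ hδ] at hN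
  have key2 : ∀ k : Fin N, ∃ U : Set (Σ i, X i), IsClopen U ∧
      (∀ y, (k + 1 : ℝ) * δ - C ≤ f y → y ∈ U) ∧ (∀ y ∈ U, (k : ℝ) * δ - C < f y) :=
    fun k => key _ _ (by linarith)
  choose U hU hbU hUa using key2
  let F : (Σ i, X i) → (Fin N → Prop) := fun y k => y ∈ U k
  have hF : IsLocallyConstant F := by
    rw [IsLocallyConstant.iff_eventually_eq]
    intro y
    have : ∀ k, ∀ᶠ z in nhds y, (z ∈ U k) = (y ∈ U k) := by
      intro k
      by_cases h : y ∈ U k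
      · filter_upwards [(hU k).2.mem_nhds h] with z hz
        simp [h, hz]
      · filter_upwards [(hU k).1.isOpen_compl.mem_nhds h] with z hz
        have hz' : z ∉ U k := hz
        simp [h, hz']
    filter_upwards [Filter.eventually_all.2 this] with z hz
    exact funext hz
  have hlt : ∀ y z, F y = F z → f y - f z ≤ 2 * δ := by
    intro y z h
    by_contra! hc
    have hz := abs_le.1 (hC z)
    have hy := abs_le.1 (hC y)
    have h0 : 0 ≤ (f z + C) / δ := div_nonneg (by linarith) hδ.le
    have h1 := Nat.le_ceil ((f z + C) / δ)
    have h2 := Nat.ceil_lt_add_one h0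
    set k := ⌈(f z + C) / δ⌉₊
    rw [div_le_iff₀ hδ] at h1
    have h3 : (k : ℝ) * δ < f z + C + δ := by
      have := mul_lt_mul_of_pos_right h2 hδ
      rwa [add_mul, div_mul_cancel₀ _ hδ.ne', one_mul] at this
    have hk : k < N := by
      have : (k : ℝ) * δ < N * δ := by linarith
      exact_mod_cast lt_of_mul_lt_mul_right this hδ.le
    have hyU : F y ⟨k, hk⟩ := hbU ⟨k, hk⟩ y (by simp only; linarith)
    rw [h] at hyU
    have := hUa ⟨k, hk⟩ z hyU
    simp only at this
    linarith
  let s : (Fin N → Prop) → ℝ := fun p => if h : ∃ y, F y = p then f h.choose else 0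
  refine ⟨s ∘ F, hF.comp s, (Set.finite_range s).subset (Set.range_comp_subset_range F s), ?_⟩
  intro y
  have h : ∃ z, F z = F y := ⟨y, rfl⟩
  have hs : (s ∘ F) y = f h.choose := dif_pos h
  rw [hs, abs_sub_le_iff]
  exact ⟨hlt _ _ h.choose_spec.symm, hlt _ _ h.choose_spec⟩
end

section
/- In the setting of an inverse system of compact Hausdorff spaces over a nonempty directed poset J with limit X: for every clopen subset U ⊆ X there exist j ∈ J and a clopen subset V ⊆ X_j such that U = π_j⁻¹(V). (This is the surjectivity part of the paper's proposition that the quasi-component functor Q(−) : CompHaus → ProFin commutes with cofiltered limits.) -/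
/-!
In an inverse system of compact Hausdorff spaces over a nonempty directed poset, every
clopen subset of the limit is the preimage of a clopen subset of some stage.
-/

universe u

theorem isClopen_limit_eq_preimage_of_stage
    {J : Type u} [PartialOrder J] [Nonempty J] [IsDirected J (· ≤ ·)]
    (X : J → Type u) [∀ j, TopologicalSpace (X j)]
    [∀ j, CompactSpace (X j)] [∀ j, T2Space (X j)]
    (f : ∀ j k : J, j ≤ k → X k → X j)
    (hcont : ∀ (j k : J) (h : j ≤ k), Continuous (f j k h))
    (hid : ∀ (j : J) (x : X j), f j j le_rfl x = x)
    (hcomp : ∀ (j k l : J) (hjk : j ≤ k) (hkl : k ≤ l) (x : X l),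
      f j k hjk (f k l hkl x) = f j l (hjk.trans hkl) x)
    (U : Set {x : ∀ j, X j // ∀ (j k : J) (h : j ≤ k), f j k h (x k) = x j})
    (hU : IsClopen U) :
    ∃ (j : J) (V : Set (X j)), IsClopen V ∧
      U = (fun x : {x : ∀ j, X j // ∀ (j k : J) (h : j ≤ k), f j k h (x k) = x j} =>
            x.1 j) ⁻¹' V := by
  classical
  by_cases hne : ∀ j, Nonempty (X j)
  swap
  · push Not at hne
    obtain ⟨i, hi⟩ := hne
    refine ⟨i, ∅, isClopen_empty, ?_⟩
    ext x
    exact (hi.false (x.1 i)).elim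
  have hLc : IsClosed {x : ∀ j, X j | ∀ (j k : J) (h : j ≤ k), f j k h (x k) = x j} := by
    simp only [Set.setOf_forall]
    refine isClosed_iInter fun j => isClosed_iInter fun k => isClosed_iInter fun h => ?_
    exact isClosed_eq ((hcont j k h).comp (continuous_apply k)) (continuous_apply j)
  haveI : CompactSpace {x : ∀ j, X j // ∀ (j k : J) (h : j ≤ k), f j k h (x k) = x j} :=
    isCompact_iff_compactSpace.mp hLc.isCompact
  have hpc : ∀ j, Continuous
      (fun x : {x : ∀ j, X j // ∀ (j k : J) (h : j ≤ k), f j k h (x k) = x j} => x.1 j) :=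
    fun j => (continuous_apply j).comp continuous_subtype_val
  -- step 1
  have h1 : ∃ j, ∀ x ∈ U, ∀ y ∈ Uᶜ, x.1 j ≠ y.1 j := by
    by_contra hcon
    push Not at hcon
    have hcl : ∀ j, IsClosed ((U ×ˢ Uᶜ) ∩ {p | p.1.1 j = p.2.1 j}) := fun j =>
      (hU.isClosed.prod hU.compl.isClosed).inter
        (isClosed_eq ((hpc j).comp continuous_fst) ((hpc j).comp continuous_snd))
    obtain ⟨⟨x, y⟩, hp⟩ := IsCompact.nonempty_iInter_of_directed_nonempty_isCompact_isClosed
      (fun j => (U ×ˢ Uᶜ) ∩ {p | p.1.1 j = p.2.1 j})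
      (by
        intro a b
        obtain ⟨c, hac, hbc⟩ := exists_ge_ge a b
        refine ⟨c, ?_, ?_⟩
        · rintro ⟨x, y⟩ ⟨h, e⟩
          refine ⟨h, ?_⟩
          simp only [Set.mem_setOf_eq] at e ⊢
          rw [← x.2 a c hac, ← y.2 a c hac, e]
        · rintro ⟨x, y⟩ ⟨h, e⟩
          refine ⟨h, ?_⟩
          simp only [Set.mem_setOf_eq] at e ⊢
          rw [← x.2 b c hbc, ← y.2 b c hbc, e])
      (fun j => by
        obtain ⟨x, hx, y, hy, e⟩ := hcon j
        exact ⟨(x, y), ⟨hx, hy⟩, e⟩)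
      (fun j => (hcl j).isCompact) hcl
    rw [Set.mem_iInter] at hp
    have hxy : x = y := Subtype.ext (funext fun j => (hp j).2)
    have hm := (hp (Classical.arbitrary J)).1
    exact hm.2 (hxy ▸ hm.1)
  obtain ⟨j, hj⟩ := h1
  have hA := (hU.isClosed.isCompact.image (hpc j)).isClosed
  have hB := (hU.compl.isClosed.isCompact.image (hpc j)).isClosed
  obtain ⟨O₁, O₂, ho1, ho2, hs1, hs2, hd⟩ := normal_separation hA hB (by
    rw [Set.disjoint_left]
    rintro _ ⟨x, hx, rfl⟩ ⟨y, hy, e⟩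
    exact hj x hx y hy e.symm)
  have h2 : ∃ k, ∃ h : j ≤ k, ∀ z : X k, f j k h z ∈ O₁ ∪ O₂ := by
    by_contra hcon
    push Not at hcon
    let S : {k // j ≤ k} → Set (∀ i, X i) := fun k =>
      {x | (∀ (i : J) (h : i ≤ k.1), f i k.1 h (x k.1) = x i)} ∩ {x | x j ∈ (O₁ ∪ O₂)ᶜ}
    have hcl : ∀ k, IsClosed (S k) := by
      intro k
      refine IsClosed.inter ?_ ((ho1.union ho2).isClosed_compl.preimage (continuous_apply j))
      simp only [Set.setOf_forall]
      refine isClosed_iInter fun i => isClosed_iInter fun h => ?_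
      exact isClosed_eq ((hcont i k.1 h).comp (continuous_apply k.1)) (continuous_apply i)
    have hmono : ∀ k l : {k // j ≤ k}, k.1 ≤ l.1 → S l ⊆ S k := by
      rintro k l hkl x ⟨hx, hxj⟩
      refine ⟨fun i h => ?_, hxj⟩
      rw [← hx k.1 hkl, hcomp, hx]
    haveI : Nonempty {k // j ≤ k} := ⟨⟨j, le_rfl⟩⟩
    obtain ⟨x, hx⟩ := IsCompact.nonempty_iInter_of_directed_nonempty_isCompact_isClosed S
      (by
        intro a b
        obtain ⟨c, hac, hbc⟩ := exists_ge_ge a.1 b.1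
        exact ⟨⟨c, a.2.trans hac⟩, hmono a ⟨c, a.2.trans hac⟩ hac,
          hmono b ⟨c, a.2.trans hac⟩ hbc⟩)
      (by
        rintro ⟨k, hk⟩
        obtain ⟨z, hz⟩ := hcon k hk
        refine ⟨fun i => if h : i ≤ k then f i k h z else Classical.choice (hne i), ?_, ?_⟩
        · intro i h
          simp only [le_refl, dif_pos, hid]
          rw [dif_pos h]
        · simp only [Set.mem_setOf_eq]
          rw [dif_pos hk]
          exact hz)
      (fun k => (hcl k).isCompact) hcl
    rw [Set.mem_iInter] at hx
    have hxL : ∀ (a b : J) (h : a ≤ b), f a b h (x b) = x a := by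
      intro a b h
      obtain ⟨c, hbc, hjc⟩ := exists_ge_ge b j
      have hc := (hx ⟨c, hjc⟩).1
      have e1 := hc b hbc
      have e2 := hc a (h.trans hbc)
      simp only at e1 e2
      rw [← e1, hcomp, e2]
    apply (hx ⟨j, le_rfl⟩).2
    by_cases hxU : (⟨x, hxL⟩ : {x : ∀ j, X j // ∀ (j k : J) (h : j ≤ k), f j k h (x k) = x j}) ∈ U
    · exact Or.inl (hs1 ⟨_, hxU, rfl⟩)
    · exact Or.inr (hs2 ⟨_, hxU, rfl⟩)
  obtain ⟨k, hjk, hk⟩ := h2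
  refine ⟨k, f j k hjk ⁻¹' O₁, ⟨?_, ho1.preimage (hcont j k hjk)⟩, ?_⟩
  · have : f j k hjk ⁻¹' O₁ = (f j k hjk ⁻¹' O₂)ᶜ := by
      ext z
      constructor
      · intro h h'
        exact Set.disjoint_left.mp hd h h'
      · intro h
        exact (hk z).resolve_right h
    rw [this]
    exact (ho2.preimage (hcont j k hjk)).isClosed_compl
  · ext x
    simp only [Set.mem_preimage]
    rw [x.2 j k hjk]
    constructor
    · intro h
      exact hs1 ⟨x, h, rfl⟩
    · intro h
      by_contra hx
      exact Set.disjoint_left.mp hd h (hs2 ⟨x, hx, rfl⟩)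
end

section
/- In the setting of an inverse system of compact Hausdorff spaces over a nonempty directed poset J with limit X: the set ⋃_{j∈J} { h ∘ π_j : h : X_j → ℝ continuous } is dense in the space C(X, ℝ) of continuous real-valued functions on X, equipped with the supremum-norm topology. (This is the Stone–Weierstrass step in the paper's proof that the functor C(−;ℝ) : CompHausᵒᵖ → Ban₁ commutes with filtered colimits.) -/
/-!
Stone–Weierstrass step: for an inverse system of compact Hausdorff spaces over a nonempty
directed poset with limit `X`, the functions pulled back from the stages are dense in
`C(X, ℝ)` for the supremum norm: every continuous `g : X → ℝ` is uniformly `ε`-approximated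
by some `h ∘ π_j` with `h : C(X_j, ℝ)`.
-/

universe u

theorem dense_pullbacks_in_continuousFunctions_on_limit
    {J : Type u} [PartialOrder J] [Nonempty J] [IsDirected J (· ≤ ·)]
    (X : J → Type u) [∀ j, TopologicalSpace (X j)]
    [∀ j, CompactSpace (X j)] [∀ j, T2Space (X j)]
    (f : ∀ j k : J, j ≤ k → X k → X j)
    (hcont : ∀ (j k : J) (h : j ≤ k), Continuous (f j k h))
    (hid : ∀ (j : J) (x : X j), f j j le_rfl x = x)
    (hcomp : ∀ (j k l : J) (hjk : j ≤ k) (hkl : k ≤ l) (x : X l),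
      f j k hjk (f k l hkl x) = f j l (hjk.trans hkl) x)
    (g : C({x : ∀ j, X j // ∀ (j k : J) (h : j ≤ k), f j k h (x k) = x j}, ℝ))
    (ε : ℝ) (hε : 0 < ε) :
    ∃ (j : J) (h : C(X j, ℝ)),
      ∀ x : {x : ∀ j, X j // ∀ (j k : J) (h : j ≤ k), f j k h (x k) = x j},
        |g x - h (x.1 j)| ≤ ε := by
  have hclosed : IsClosed {x : ∀ j, X j | ∀ (j k : J) (h : j ≤ k), f j k h (x k) = x j} := by
    simp only [Set.setOf_forall]
    exact isClosed_iInter fun j => isClosed_iInter fun k => isClosed_iInter fun h =>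
      isClosed_eq ((hcont j k h).comp (continuous_apply k)) (continuous_apply j)
  haveI : CompactSpace {x : ∀ j, X j // ∀ (j k : J) (h : j ≤ k), f j k h (x k) = x j} :=
    isCompact_iff_compactSpace.mp hclosed.isCompact
  have lift : ∀ (j k : J) (_ : j ≤ k) (h : C(X j, ℝ)), ∃ h' : C(X k, ℝ),
      ∀ x : {x : ∀ j, X j // ∀ (j k : J) (h : j ≤ k), f j k h (x k) = x j},
        h' (x.1 k) = h (x.1 j) := by
    intro j k hjk h
    refine ⟨h.comp ⟨f j k hjk, hcont j k hjk⟩, fun x => ?_⟩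
    simp [x.2 j k hjk]
  have lift2 : ∀ (j k : J) (h : C(X j, ℝ)) (h' : C(X k, ℝ)), ∃ (l : J) (a b : C(X l, ℝ)),
      ∀ x : {x : ∀ j, X j // ∀ (j k : J) (h : j ≤ k), f j k h (x k) = x j},
        a (x.1 l) = h (x.1 j) ∧ b (x.1 l) = h' (x.1 k) := by
    intro j k h h'
    obtain ⟨l, hjl, hkl⟩ := exists_ge_ge j k
    obtain ⟨a, ha⟩ := lift j l hjl h
    obtain ⟨b, hb⟩ := lift k l hkl h'
    exact ⟨l, a, b, fun x => ⟨ha x, hb x⟩⟩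
  let A : Subalgebra ℝ C({x : ∀ j, X j // ∀ (j k : J) (h : j ≤ k), f j k h (x k) = x j}, ℝ) :=
    { carrier := {u | ∃ (j : J) (h : C(X j, ℝ)), ∀ x, u x = h (x.1 j)}
      mul_mem' := by
        rintro u v ⟨j, h, hu⟩ ⟨k, h', hv⟩
        obtain ⟨l, a, b, hab⟩ := lift2 j k h h'
        exact ⟨l, a * b, fun x => by simp [hu, hv, hab x]⟩
      add_mem' := by
        rintro u v ⟨j, h, hu⟩ ⟨k, h', hv⟩
        obtain ⟨l, a, b, hab⟩ := lift2 j k h h'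
        exact ⟨l, a + b, fun x => by simp [hu, hv, hab x]⟩
      algebraMap_mem' := by
        intro r
        exact ⟨Classical.arbitrary J, ContinuousMap.const _ r, fun x => by simp⟩ }
  have hsep : A.SeparatesPoints := by
    intro x y hxy
    obtain ⟨j, hj⟩ : ∃ j, x.1 j ≠ y.1 j := by
      by_contra! hc
      exact hxy (Subtype.ext (funext hc))
    obtain ⟨h, h0, h1, -⟩ := exists_continuous_zero_one_of_isClosed
      (isClosed_singleton (x := x.1 j)) (isClosed_singleton (x := y.1 j))
      (Set.disjoint_singleton.mpr hj)
    let p : C({x : ∀ j, X j // ∀ (j k : J) (h : j ≤ k), f j k h (x k) = x j}, ℝ) :=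
      h.comp ⟨fun x => x.1 j, (continuous_apply j).comp continuous_subtype_val⟩
    refine ⟨p, ⟨p, ⟨j, h, fun x => rfl⟩, rfl⟩, ?_⟩
    have e0 : p x = 0 := h0 rfl
    have e1 : p y = 1 := h1 rfl
    rw [e0, e1]
    exact zero_ne_one
  obtain ⟨⟨u, j, h, hu⟩, hlt⟩ :=
    ContinuousMap.exists_mem_subalgebra_near_continuousMap_of_separatesPoints A hsep g ε hε
  refine ⟨j, h, fun x => ?_⟩
  have := (ContinuousMap.norm_coe_le_norm (u - g) x).trans hlt.le
  rw [abs_sub_comm, ← hu x]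
  simpa using this
end

section
/- In the setting of an inverse system of compact Hausdorff spaces over a nonempty directed poset J with limit X: for every j ∈ J and every continuous function h : X_j → ℝ, one has ‖h ∘ π_j‖ = ⨅_{k ∈ J, k ≥ j} ‖h ∘ f_{k j}‖, where ‖·‖ denotes the supremum norm. (This expresses that the canonical map from the naive colimit of the Banach spaces C(X_j;ℝ) to C(X;ℝ) is isometric.) -/
/-!
For an inverse system of compact Hausdorff spaces over a nonempty directed poset with limit
`X`: for any stage `j` and continuous `h : X_j → ℝ`, the supremum norm of `h ∘ π_j` equals
the infimum over `k ≥ j` of the supremum norms of `h ∘ f_{k j}`.  (Supremum norms are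
expressed as suprema of absolute values; the supremum over an empty space is `0`.)
-/

universe u

theorem norm_comp_proj_eq_iInf_norm_comp_transition
    {J : Type u} [PartialOrder J] [Nonempty J] [IsDirected J (· ≤ ·)]
    (X : J → Type u) [∀ j, TopologicalSpace (X j)]
    [∀ j, CompactSpace (X j)] [∀ j, T2Space (X j)]
    (f : ∀ j k : J, j ≤ k → X k → X j)
    (hcont : ∀ (j k : J) (h : j ≤ k), Continuous (f j k h))
    (hid : ∀ (j : J) (x : X j), f j j le_rfl x = x)
    (hcomp : ∀ (j k l : J) (hjk : j ≤ k) (hkl : k ≤ l) (x : X l),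
      f j k hjk (f k l hkl x) = f j l (hjk.trans hkl) x)
    (j : J) (h : C(X j, ℝ)) :
    (⨆ x : {x : ∀ j, X j // ∀ (j k : J) (hjk : j ≤ k), f j k hjk (x k) = x j},
        |h (x.1 j)|) =
      ⨅ k : {k : J // j ≤ k}, ⨆ y : X k.1, |h (f j k.1 k.2 y)| := by
  classical
  have bdd : ∀ k : {k : J // j ≤ k},
      BddAbove (Set.range fun y : X k.1 => |h (f j k.1 k.2 y)|) := fun k =>
    (isCompact_range ((h.continuous.comp (hcont j k.1 k.2)).abs)).bddAbove
  have nn : ∀ k : {k : J // j ≤ k}, 0 ≤ ⨆ y : X k.1, |h (f j k.1 k.2 y)| := fun k =>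
    Real.iSup_nonneg fun _ => abs_nonneg _
  have bddb : BddBelow (Set.range fun k : {k : J // j ≤ k} =>
      ⨆ y : X k.1, |h (f j k.1 k.2 y)|) := ⟨0, by rintro _ ⟨k, rfl⟩; exact nn k⟩
  haveI : Nonempty {k : J // j ≤ k} := ⟨⟨j, le_rfl⟩⟩
  apply le_antisymm
  · refine le_ciInf fun k => Real.iSup_le (fun x => ?_) (nn k)
    have := le_ciSup (bdd k) (x.1 k.1)
    simpa only [x.2 j k.1 k.2] using this
  · by_cases hne : ∀ k : {k : J // j ≤ k}, Nonempty (X k.1)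
    · set c := ⨅ k : {k : J // j ≤ k}, ⨆ y : X k.1, |h (f j k.1 k.2 y)| with hc
      have hy : ∀ k : {k : J // j ≤ k}, ∃ y : X k.1, c ≤ |h (f j k.1 k.2 y)| := by
        intro k
        haveI := hne k
        obtain ⟨y, -, hy⟩ := isCompact_univ.exists_isMaxOn Set.univ_nonempty
          ((h.continuous.comp (hcont j k.1 k.2)).abs).continuousOn
        refine ⟨y, (ciInf_le bddb k).trans (ciSup_le fun z => ?_)⟩
        exact hy (Set.mem_univ z)
      have hne' : ∀ k, Nonempty (X k) := by
        intro k
        obtain ⟨m, hm, hk⟩ := exists_ge_ge j k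
        obtain ⟨y⟩ := hne ⟨m, hm⟩
        exact ⟨f k m hk y⟩
      let S : {k : J // j ≤ k} → Set (∀ i, X i) := fun l =>
        (⋂ (a : J) (ha : a ≤ l.1), {x | f a l.1 ha (x l.1) = x a}) ∩ {x | c ≤ |h (x j)|}
      have hcl : ∀ l, IsClosed (S l) := by
        intro l
        refine IsClosed.inter (isClosed_iInter fun a => isClosed_iInter fun ha => ?_) ?_
        · exact isClosed_eq ((hcont a l.1 ha).comp (continuous_apply _)) (continuous_apply _)
        · exact isClosed_le continuous_const (h.continuous.comp (continuous_apply j)).abs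
      have hmem : ∀ l x, x ∈ S l ↔
          (∀ (a : J) (ha : a ≤ l.1), f a l.1 ha (x l.1) = x a) ∧ c ≤ |h (x j)| := by
        intro l x
        simp only [S, Set.mem_inter_iff, Set.mem_iInter, Set.mem_setOf_eq]
      have hmono : ∀ l m : {k : J // j ≤ k}, l.1 ≤ m.1 → S m ⊆ S l := by
        intro l m hlm x hx
        rw [hmem] at hx ⊢
        refine ⟨fun a ha => ?_, hx.2⟩
        rw [← hx.1 l.1 hlm, hcomp, hx.1]
      have hdir : Directed (· ⊇ ·) S := by
        intro l m
        obtain ⟨n, hl, hm⟩ := exists_ge_ge l.1 m.1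
        exact ⟨⟨n, l.2.trans hl⟩, hmono _ _ hl, hmono _ _ hm⟩
      have hSne : ∀ l, (S l).Nonempty := by
        intro l
        obtain ⟨y, hy⟩ := hy l
        refine ⟨fun a => if ha : a ≤ l.1 then f a l.1 ha y else (hne' a).some, ?_⟩
        rw [hmem]
        refine ⟨fun a ha => ?_, ?_⟩
        · simp only [dif_pos ha, dif_pos (le_refl l.1), hid]
        · simpa only [dif_pos l.2] using hy
      obtain ⟨x, hx⟩ := IsCompact.nonempty_iInter_of_directed_nonempty_isCompact_isClosed S hdir
        hSne (fun l => (hcl l).isCompact) hcl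
      rw [Set.mem_iInter] at hx
      have hxl : ∀ (a k : J) (hak : a ≤ k), f a k hak (x k) = x a := by
        intro a k hak
        obtain ⟨m, hm, hk⟩ := exists_ge_ge j k
        have := ((hmem _ _).1 (hx ⟨m, hm⟩)).1
        rw [← this k hk, hcomp, this a (hak.trans hk)]
      have hb : BddAbove (Set.range fun x : {x : ∀ j, X j //
          ∀ (j k : J) (hjk : j ≤ k), f j k hjk (x k) = x j} => |h (x.1 j)|) := by
        refine (isCompact_range h.continuous.abs).bddAbove.mono ?_
        rintro _ ⟨z, rfl⟩
        exact ⟨z.1 j, rfl⟩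
      exact ((hmem _ _).1 (hx ⟨j, le_rfl⟩)).2.trans (le_ciSup hb ⟨x, hxl⟩)
    · push Not at hne
      obtain ⟨k, hk⟩ := hne
      refine (ciInf_le bddb k).trans ?_
      rw [Real.iSup_of_isEmpty]
      exact Real.iSup_nonneg fun _ => abs_nonneg _
end

section
/- Let X be a compact metrizable topological space, and let Q = (ℕ → [0,1]) denote the Hilbert cube with the product topology. Then there exist continuous maps f, g : Q → Q and a topological embedding e : X → Q (a homeomorphism onto its image) such that range(e) = { q ∈ Q : f(q) = g(q) }. (Every compact metrizable space is an equalizer of two self-maps of the Hilbert cube; this is the key step in the paper's proof that the unit interval generates CompHausᵒᵖ under colimits.) -/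
/-!
Every compact metrizable space is an equalizer of two continuous self-maps of the Hilbert
cube: there are continuous `f g : Q → Q` (where `Q = ℕ → [0,1]`) and an embedding
`e : X → Q` with `range e = {q | f q = g q}`.
-/

theorem compact_metrizable_is_equalizer_in_hilbert_cube
    (X : Type) [TopologicalSpace X] [CompactSpace X]
    [TopologicalSpace.MetrizableSpace X] :
    ∃ (f g : (ℕ → unitInterval) → (ℕ → unitInterval)) (e : X → (ℕ → unitInterval)),
      Continuous f ∧ Continuous g ∧ Topology.IsEmbedding e ∧
      Set.range e = {q : ℕ → unitInterval | f q = g q} := by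
  let _ := TopologicalSpace.metrizableSpaceMetric X
  obtain ⟨e, he⟩ := Metric.PiNatEmbed.exists_embedding_to_hilbert_cube (X := X)
  rcases isEmpty_or_nonempty X with hX | hX
  · refine ⟨fun _ _ => 0, fun _ _ => 1, e, continuous_const, continuous_const, he, ?_⟩
    ext q
    simp [funext_iff]
  · let _ := TopologicalSpace.metrizableSpaceMetric (ℕ → unitInterval)
    have hc : IsClosed (Set.range e) := (isCompact_range he.continuous).isClosed
    have hn : (Set.range e).Nonempty := Set.range_nonempty e
    refine ⟨fun q _ => Set.projIcc 0 1 zero_le_one (Metric.infDist q (Set.range e)),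
      fun _ _ => 0, e, ?_, continuous_const, he, ?_⟩
    · exact continuous_pi fun _ => continuous_projIcc.comp (Metric.continuous_infDist_pt _)
    · ext q
      rw [hc.mem_iff_infDist_zero hn, Set.mem_ofPred_eq, funext_iff]
      have h0 : 0 ≤ Metric.infDist q (Set.range e) := Metric.infDist_nonneg
      constructor
      · intro h _
        beta_reduce
        rw [h]
        exact Set.projIcc_left (zero_le_one (α := ℝ))
      · intro h
        have h1 := (Set.projIcc_eq_left zero_lt_one).1 (h 0)
        exact le_antisymm h1 h0
end

section
/- Let I be a nonempty directed partial order and let F be a functor from ℕᵒᵖ × I to types, i.e., sets F(n,i) together with maps σ : F(n+1,i) → F(n,i) and, for i ≤ j, maps τ : F(n,i) → F(n,j), commuting and functorial in both variables. Let Φ be the set of monotone maps φ : ℕ → I, partially ordered pointwise (Φ is directed). For φ ∈ Φ let L(φ) be the limit of F(n, φ(m)) over the poset {(n,m) ∈ ℕ × ℕ : n ≤ m}, ordered by (n,m) ≤ (n',m') iff n' ≤ n and m ≤ m'; concretely L(φ) is the set of families (x_{n,m})_{n≤m} with x_{n,m} ∈ F(n, φ(m)) compatible with all the structure maps, and for φ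 ≤ ψ the maps τ induce a map L(φ) → L(ψ). Then the assignment sending (x_{n,m})_{n≤m} ∈ L(φ) to the family ([x_{n,n}])_{n∈ℕ} induces a well-defined map colim_{φ∈Φ} L(φ) → lim_{n∈ℕᵒᵖ} colim_{i∈I} F(n,i), and this map is a bijection. (In the category of types, sequential limits of filtered colimits are computed as a filtered colimit of limits over monotone reindexings.) -/
/-!
In the category of types, sequential limits of filtered colimits are computed as a filtered
colimit, over monotone reindexings `φ : ℕ → I`, of limits over `{(n, m) : n ≤ m}`.
-/

universe u

namespace Stmt14

variable {I : Type u} [PartialOrder I]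

section Defs

variable (F : ℕ → I → Type u)
  (σ : ∀ (n : ℕ) (i : I), F (n + 1) i → F n i)
  (τ : ∀ (i j : I), i ≤ j → ∀ n : ℕ, F n i → F n j)

/-- The directed colimit `colim_{i ∈ I} F n i`: the quotient of `Σ i, F n i` identifying
`x ∈ F n i` with `τ x ∈ F n j` for `i ≤ j`. -/
def ColimObj (n : ℕ) : Type u :=
  Quot (fun x y : Σ i : I, F n i => ∃ h : x.1 ≤ y.1, τ x.1 y.1 h n x.2 = y.2)

/-- For a monotone `φ : ℕ → I`, the limit `L(φ)` of `F n (φ m)` over the poset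
`{(n, m) : n ≤ m}`: compatible families `(x_{n,m})_{n ≤ m}`. -/
def LimObj (φ : ℕ → I) (hφ : Monotone φ) : Type u :=
  { x : ∀ n m : ℕ, n ≤ m → F n (φ m) //
      (∀ (n m : ℕ) (h : n + 1 ≤ m),
          σ n (φ m) (x (n + 1) m h) = x n m (Nat.le_of_succ_le h)) ∧
      (∀ (n m m' : ℕ) (h : n ≤ m) (h' : m ≤ m'),
          τ (φ m) (φ m') (hφ h') n (x n m h) = x n m' (h.trans h')) }

variable (hcomm : ∀ (i j : I) (hij : i ≤ j) (n : ℕ) (x : F (n + 1) i),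
    τ i j hij n (σ n i x) = σ n j (τ i j hij (n + 1) x))

/-- The map `colim_i F (n+1) i → colim_i F n i` induced by `σ`. -/
def colimSucc (n : ℕ) : ColimObj F τ (n + 1) → ColimObj F τ n :=
  Quot.lift (fun x => Quot.mk _ ⟨x.1, σ n x.1 x.2⟩)
    (by
      rintro ⟨i, x⟩ ⟨j, y⟩ ⟨h, hxy⟩
      apply Quot.sound
      refine ⟨h, ?_⟩
      dsimp only at hxy ⊢
      rw [hcomm, hxy])

/-- The sequential limit `lim_{n ∈ ℕᵒᵖ} colim_{i ∈ I} F n i`. -/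
def LimColim : Type u :=
  { a : ∀ n : ℕ, ColimObj F τ n // ∀ n : ℕ, colimSucc F σ τ hcomm n (a (n + 1)) = a n }

/-- The filtered colimit `colim_{φ ∈ Φ} L(φ)` over the poset `Φ` of monotone maps
`ℕ → I`, ordered pointwise. -/
def ColimLim : Type u :=
  Quot (fun a b : Σ φ : { φ : ℕ → I // Monotone φ }, LimObj F σ τ φ.1 φ.2 =>
    ∃ h : ∀ n : ℕ, a.1.1 n ≤ b.1.1 n,
      ∀ (n m : ℕ) (hm : n ≤ m),
        τ (a.1.1 m) (b.1.1 m) (h m) n (a.2.1 n m hm) = b.2.1 n m hm)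

/-- The canonical comparison map, sending the class of `(x_{n,m})_{n ≤ m} ∈ L(φ)` to the
family `([x_{n,n}])_{n ∈ ℕ}`. -/
def canonical : ColimLim F σ τ → LimColim F σ τ hcomm :=
  Quot.lift
    (fun a =>
      ⟨fun n => Quot.mk _ ⟨a.1.1 n, a.2.1 n n le_rfl⟩, by
        intro n
        show Quot.mk _
            (⟨a.1.1 (n + 1), σ n (a.1.1 (n + 1)) (a.2.1 (n + 1) (n + 1) le_rfl)⟩ :
              Σ i : I, F n i) =
          Quot.mk _ (⟨a.1.1 n, a.2.1 n n le_rfl⟩ : Σ i : I, F n i)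
        rw [a.2.2.1 n (n + 1) (le_refl (n + 1))]
        exact (Quot.sound
          ⟨a.1.2 (Nat.le_succ n), a.2.2.2 n n (n + 1) le_rfl (Nat.le_succ n)⟩).symm⟩)
    (by
      rintro a b ⟨h, hab⟩
      apply Subtype.ext
      funext n
      exact Quot.sound ⟨h n, hab n n le_rfl⟩)

end Defs

end Stmt14

theorem aux_colim_exact {I : Type u} [PartialOrder I] [IsDirected I (· ≤ ·)]
    (F : ℕ → I → Type u)
    (τ : ∀ (i j : I), i ≤ j → ∀ n : ℕ, F n i → F n j)
    (hτ_comp : ∀ (i j k : I) (hij : i ≤ j) (hjk : j ≤ k) (n : ℕ) (x : F n i),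
      τ j k hjk n (τ i j hij n x) = τ i k (hij.trans hjk) n x)
    (n : ℕ) (x y : Σ i : I, F n i)
    (h : (Quot.mk _ x : Stmt14.ColimObj F τ n) = Quot.mk _ y) :
    ∃ (k : I) (hx : x.1 ≤ k) (hy : y.1 ≤ k), τ x.1 k hx n x.2 = τ y.1 k hy n y.2 := by
  have h2 := Quot.eqvGen_exact h
  clear h
  induction h2 with
  | rel x y h =>
    obtain ⟨h, e⟩ := h
    obtain ⟨k, hk, -⟩ := exists_ge_ge y.1 y.1
    exact ⟨k, h.trans hk, hk, by rw [← e, hτ_comp]⟩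
  | refl x =>
    exact ⟨x.1, le_rfl, le_rfl, rfl⟩
  | symm x y _ ih =>
    obtain ⟨k, hx, hy, e⟩ := ih
    exact ⟨k, hy, hx, e.symm⟩
  | trans x y z _ _ ih1 ih2 =>
    obtain ⟨k, hx, hy, e⟩ := ih1
    obtain ⟨l, hy', hz, e'⟩ := ih2
    obtain ⟨m, hk, hl⟩ := exists_ge_ge k l
    refine ⟨m, hx.trans hk, hz.trans hl, ?_⟩
    rw [← hτ_comp _ _ _ hx hk, e, hτ_comp, ← hτ_comp _ _ _ hz hl, ← e', hτ_comp]

theorem aux_monotone_bound {I : Type u} [PartialOrder I] [IsDirected I (· ≤ ·)]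
    (g : ℕ → I) : ∃ φ : ℕ → I, Monotone φ ∧ ∀ n, g n ≤ φ n := by
  choose u hu1 hu2 using fun a b : I => exists_ge_ge a b
  let φ : ℕ → I := fun n => Nat.rec (g 0) (fun n r => u r (g (n + 1))) n
  refine ⟨φ, monotone_nat_of_le_succ fun n => hu1 _ _, fun n => ?_⟩
  cases n with
  | zero => exact le_rfl
  | succ n => exact hu2 _ _

open Stmt14 in
/-- Sequential limits of filtered colimits of types are filtered colimits of limits over
monotone reindexings: the poset of monotone maps `ℕ → I` (ordered pointwise) is directed,
and the canonical map `colim_{φ} L(φ) → lim_n colim_i F n i` is a bijection. -/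
theorem sequentialLim_of_filteredColim_of_types
    {I : Type u} [PartialOrder I] [Nonempty I] [IsDirected I (· ≤ ·)]
    (F : ℕ → I → Type u)
    (σ : ∀ (n : ℕ) (i : I), F (n + 1) i → F n i)
    (τ : ∀ (i j : I), i ≤ j → ∀ n : ℕ, F n i → F n j)
    (hτ_id : ∀ (i : I) (n : ℕ) (x : F n i), τ i i le_rfl n x = x)
    (hτ_comp : ∀ (i j k : I) (hij : i ≤ j) (hjk : j ≤ k) (n : ℕ) (x : F n i),
      τ j k hjk n (τ i j hij n x) = τ i k (hij.trans hjk) n x)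
    (hcomm : ∀ (i j : I) (hij : i ≤ j) (n : ℕ) (x : F (n + 1) i),
      τ i j hij n (σ n i x) = σ n j (τ i j hij (n + 1) x)) :
    (∀ φ ψ : { φ : ℕ → I // Monotone φ }, ∃ χ : { φ : ℕ → I // Monotone φ },
      (∀ n : ℕ, φ.1 n ≤ χ.1 n) ∧ (∀ n : ℕ, ψ.1 n ≤ χ.1 n)) ∧
    Function.Bijective (canonical F σ τ hcomm) := by
  refine ⟨?_, ?_, ?_⟩
  · intro φ ψ
    choose u hu1 hu2 using fun n => exists_ge_ge (φ.1 n) (ψ.1 n)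
    obtain ⟨χ, hχ, h⟩ := aux_monotone_bound u
    exact ⟨⟨χ, hχ⟩, fun n => (hu1 n).trans (h n), fun n => (hu2 n).trans (h n)⟩
  · rintro ⟨⟨⟨φ, hφ⟩, x⟩⟩ ⟨⟨⟨ψ, hψ⟩, y⟩⟩ hxy
    have key : ∀ n, ∃ (k : I) (hx : φ n ≤ k) (hy : ψ n ≤ k),
        τ (φ n) k hx n (x.1 n n le_rfl) = τ (ψ n) k hy n (y.1 n n le_rfl) := fun n =>
      aux_colim_exact F τ hτ_comp n ⟨φ n, x.1 n n le_rfl⟩ ⟨ψ n, y.1 n n le_rfl⟩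
        (congrFun (congrArg Subtype.val hxy) n)
    choose k hk1 hk2 hk using key
    obtain ⟨χ, hχ, h⟩ := aux_monotone_bound k
    have e : ∀ (m d n : ℕ) (hm : n ≤ m), m = n + d →
        τ (φ m) (χ m) ((hk1 m).trans (h m)) n (x.1 n m hm) =
          τ (ψ m) (χ m) ((hk2 m).trans (h m)) n (y.1 n m hm) := by
      intro m d
      induction d with
      | zero =>
        intro n hm hd
        obtain rfl : m = n := hd
        rw [← hτ_comp _ _ _ (hk1 m) (h m), hk, hτ_comp]
      | succ d ih =>
        intro n hm hd
        have hm' : n + 1 ≤ m := by omega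
        rw [← x.2.1 n m hm', ← y.2.1 n m hm', hcomm, hcomm, ih (n + 1) hm' (by omega)]
    let z : LimObj F σ τ χ hχ :=
      ⟨fun n m hm => τ (φ m) (χ m) ((hk1 m).trans (h m)) n (x.1 n m hm), by
        intro n m hm
        rw [← hcomm, x.2.1], by
        intro n m m' hm hm'
        beta_reduce
        rw [← x.2.2 n m m' hm hm', hτ_comp, hτ_comp]⟩
    have hz1 : (Quot.mk _ ⟨⟨φ, hφ⟩, x⟩ : ColimLim F σ τ) = Quot.mk _ ⟨⟨χ, hχ⟩, z⟩ :=
      Quot.sound ⟨fun m => (hk1 m).trans (h m), fun n m hm => rfl⟩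
    have hz2 : (Quot.mk _ ⟨⟨ψ, hψ⟩, y⟩ : ColimLim F σ τ) = Quot.mk _ ⟨⟨χ, hχ⟩, z⟩ :=
      Quot.sound ⟨fun m => (hk2 m).trans (h m), fun n m hm =>
        (e m (m - n) n hm (by omega)).symm⟩
    exact hz1.trans hz2.symm
  · rintro ⟨a, ha⟩
    choose y hy using fun n => Quot.exists_rep (a n)
    have key : ∀ n, ∃ (k : I) (h1 : (y (n + 1)).1 ≤ k) (h2 : (y n).1 ≤ k),
        τ _ k h1 n (σ n _ (y (n + 1)).2) = τ _ k h2 n (y n).2 := fun n =>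
      aux_colim_exact F τ hτ_comp n ⟨(y (n + 1)).1, σ n _ (y (n + 1)).2⟩ (y n) (by
        have h := ha n
        rw [← hy n, ← hy (n + 1)] at h
        exact h)
    choose k hk1 hk2 hk using key
    choose u hu1 hu2 using fun n => exists_ge_ge (y n).1 (k (n - 1))
    obtain ⟨φ, hφ, h⟩ := aux_monotone_bound u
    have hyφ : ∀ n m, n ≤ m → (y n).1 ≤ φ m := fun n m hm =>
      ((hu1 n).trans (h n)).trans (hφ hm)
    have hkφ : ∀ n m, n + 1 ≤ m → k n ≤ φ m := fun n m hm =>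
      ((hu2 (n + 1)).trans (h (n + 1))).trans (hφ hm)
    let x : LimObj F σ τ φ hφ :=
      ⟨fun n m hm => τ (y n).1 (φ m) (hyφ n m hm) n (y n).2, by
        intro n m hm
        rw [← hcomm, ← hτ_comp _ _ _ (hk1 n) (hkφ n m hm), hk, hτ_comp], by
        intro n m m' hm hm'
        rw [hτ_comp]⟩
    refine ⟨Quot.mk _ ⟨⟨φ, hφ⟩, x⟩, Subtype.ext (funext fun n => ?_)⟩
    refine Eq.trans ?_ (hy n)
    exact (Quot.sound ⟨hyφ n n le_rfl, rfl⟩).symm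
end

section
/- Let R be a commutative ring. Call a quasi-ideal a pair (I, α) where I is an R-module and α : I → R is an R-linear map satisfying α(x)•y = α(y)•x for all x, y ∈ I; call (I, α) idempotent if the R-linear map μ : I ⊗[R] I → I determined by μ(x ⊗ y) = α(x)•y is bijective. Then: (1) if J ⊆ R is an ideal with J·J = J such that the R-module J ⊗[R] J is flat, then the pair (J ⊗[R] J, m), where m : J ⊗[R] J → R is determined by m(a ⊗ b) = a·b, is an idempotent quasi-ideal, its underlying module J ⊗[R] J is flat, and the range of m equals J; (2) conversely, if (I, α) is an idempotent quasi-ideal such that I is a flat R-module, then the ideal J := range(α) satisfies J·J = J, and there is an R-module isomorphism φ : J ⊗[R] J → I with α ∘ φ = m (in particular, J ⊗[R] J is flat). Thus (I, α) ↦ range(α) and J ↦ (J ⊗[R] J, m) are mutually inverse correspondences between isomorphism classes of idempotent quasi-ideals with flat underlying module and ideals J with J·J = J and J ⊗[R] J flat. -/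
/-!
Idempotent quasi-ideals with flat underlying module over a commutative ring `R` correspond
to ideals `J` with `J·J = J` and `J ⊗[R] J` flat.
-/

open scoped TensorProduct

universe u

namespace Stmt16

variable (R : Type u) [CommRing R]

/-- A quasi-ideal is an `R`-module `M` with a linear map `α : M → R` such that
`α x • y = α y • x` for all `x y`. -/
def IsQuasiIdeal (M : Type u) [AddCommGroup M] [Module R M] (α : M →ₗ[R] R) : Prop :=
  ∀ x y : M, α x • y = α y • x

/-- The multiplication map `μ : M ⊗[R] M → M` of a quasi-ideal, determined by
`μ (x ⊗ y) = α x • y`. -/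
noncomputable def quasiIdealMul (M : Type u) [AddCommGroup M] [Module R M]
    (α : M →ₗ[R] R) : M ⊗[R] M →ₗ[R] M :=
  TensorProduct.lift ((LinearMap.lsmul R M).comp α)

/-- The multiplication map `J ⊗[R] J → R` of an ideal, determined by `a ⊗ b ↦ a * b`. -/
noncomputable def idealMul (J : Ideal R) : (↥J ⊗[R] ↥J) →ₗ[R] R :=
  TensorProduct.lift (((LinearMap.mul R R).comp J.subtype).compl₂ J.subtype)

end Stmt16

namespace Stmt16

lemma rTensor_bij (R : Type u) [CommRing R] (M N : Type u) [AddCommGroup M] [Module R M]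
    [AddCommGroup N] [Module R N] (α : M →ₗ[R] R) (h : IsQuasiIdeal R M α)
    (hN : ∀ n : N, n ∈ (LinearMap.range α : Ideal R) • (⊤ : Submodule R N)) :
    Function.Bijective (LinearMap.rTensor N α.rangeRestrict) := by
  have hs : Function.Surjective α.rangeRestrict := LinearMap.surjective_rangeRestrict α
  refine ⟨?_, LinearMap.rTensor_surjective N hs⟩
  have hex : Function.Exact (LinearMap.ker α.rangeRestrict).subtype α.rangeRestrict :=
    LinearMap.exact_subtype_ker_map _
  have hex2 := rTensor_exact N hex hs
  have hz : LinearMap.rTensor N (LinearMap.ker α.rangeRestrict).subtype = 0 := by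
    apply TensorProduct.ext'
    rintro ⟨k, hk⟩ n
    have hk' : α k = 0 := by
      have := congrArg Subtype.val (LinearMap.mem_ker.mp hk)
      simpa using this
    simp only [LinearMap.rTensor_tmul, Submodule.subtype_apply, LinearMap.zero_apply]
    refine Submodule.smul_induction_on (p := fun n => k ⊗ₜ[R] n = 0) (hN n) ?_ ?_
    · rintro r ⟨y, rfl⟩ n -
      rw [← TensorProduct.smul_tmul, h y k, hk', zero_smul, TensorProduct.zero_tmul]
    · intro x y hx hy
      rw [TensorProduct.tmul_add, hx, hy, add_zero]
  rw [injective_iff_map_eq_zero]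
  intro x hx
  obtain ⟨y, rfl⟩ := (hex2 x).mp hx
  rw [hz, LinearMap.zero_apply]

lemma quasiIdealMul_mem (R : Type u) [CommRing R] (M : Type u) [AddCommGroup M] [Module R M]
    (α : M →ₗ[R] R) (x : M ⊗[R] M) :
    quasiIdealMul R M α x ∈ (LinearMap.range α : Ideal R) • (⊤ : Submodule R M) := by
  induction x with
  | zero => simp
  | tmul x y => exact Submodule.smul_mem_smul (LinearMap.mem_range_self α x) trivial
  | add x y hx hy => rw [map_add]; exact add_mem hx hy

lemma mem_smul_top_of_idem (R : Type u) [CommRing R] (J : Ideal R) (hJ : J * J = J) (x : J) :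
    x ∈ J • (⊤ : Submodule R J) := by
  have hx : (x : R) ∈ J * J := by rw [hJ]; exact x.2
  have : (J • (⊤ : Submodule R J)).map J.subtype = J * J := by
    rw [Submodule.map_smul'', Submodule.map_top, Submodule.range_subtype, smul_eq_mul]
  rw [← this] at hx
  obtain ⟨y, hy, hyx⟩ := hx
  have : y = x := Subtype.ext hyx
  exact this ▸ hy

lemma range_idealMul (R : Type u) [CommRing R] (J : Ideal R) :
    LinearMap.range (idealMul R J) = J * J := by
  apply le_antisymm
  · rintro _ ⟨x, rfl⟩
    induction x with
    | zero => simp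
    | tmul x y => exact Ideal.mul_mem_mul x.2 y.2
    | add x y hx hy => rw [map_add]; exact add_mem hx hy
  · rw [Ideal.mul_le]
    intro r hr s hs
    exact ⟨(⟨r, hr⟩ : J) ⊗ₜ (⟨s, hs⟩ : J), rfl⟩

lemma isQuasiIdeal_idealMul (R : Type u) [CommRing R] (J : Ideal R) :
    IsQuasiIdeal R (↥J ⊗[R] ↥J) (idealMul R J) := by
  intro x y
  induction x with
  | zero => simp
  | add x x' hx hx' => rw [map_add, add_smul, smul_add, hx, hx']
  | tmul a b =>
    induction y with
    | zero => simp
    | add x x' hx hx' => rw [map_add, add_smul, smul_add, hx, hx']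
    | tmul c d =>
      change ((a : R) * b) • (c ⊗ₜ[R] d) = ((c : R) * d) • (a ⊗ₜ[R] b)
      have h1 : ((a : R) * b) • c = ((b : R) * c) • a := Subtype.ext (by
        simp only [Submodule.coe_smul, smul_eq_mul]; ring)
      have h2 : ((b : R) * c) • d = ((c : R) * d) • b := Subtype.ext (by
        simp only [Submodule.coe_smul, smul_eq_mul]; ring)
      rw [TensorProduct.smul_tmul', h1, TensorProduct.smul_tmul, h2, TensorProduct.tmul_smul]

end Stmt16

open Stmt16 in
/-- The correspondence between idempotent quasi-ideals with flat underlying module and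
idempotent ideals `J` with `J ⊗[R] J` flat:
(1) for an ideal `J` with `J * J = J` and `J ⊗[R] J` flat, the pair `(J ⊗[R] J, m)` is an
idempotent quasi-ideal with flat underlying module and the range of `m` is `J`;
(2) for an idempotent quasi-ideal `(M, α)` with `M` flat, the ideal `J = range α` satisfies
`J * J = J` and there is an isomorphism `φ : J ⊗[R] J ≃ M` with `α ∘ φ = m` (so `J ⊗[R] J`
is flat). -/
theorem quasiIdeal_correspondence (R : Type u) [CommRing R] :
    (∀ J : Ideal R, J * J = J → Module.Flat R (↥J ⊗[R] ↥J) →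
      IsQuasiIdeal R (↥J ⊗[R] ↥J) (idealMul R J) ∧
      Function.Bijective (quasiIdealMul R (↥J ⊗[R] ↥J) (idealMul R J)) ∧
      Module.Flat R (↥J ⊗[R] ↥J) ∧
      LinearMap.range (idealMul R J) = J) ∧
    (∀ (M : Type u) [AddCommGroup M] [Module R M] (α : M →ₗ[R] R),
      IsQuasiIdeal R M α → Function.Bijective (quasiIdealMul R M α) → Module.Flat R M →
        LinearMap.range α * LinearMap.range α = LinearMap.range α ∧
        (∃ φ : (↥(LinearMap.range α) ⊗[R] ↥(LinearMap.range α)) ≃ₗ[R] M,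
          ∀ x : ↥(LinearMap.range α) ⊗[R] ↥(LinearMap.range α),
            α (φ x) = idealMul R (LinearMap.range α) x) ∧
        Module.Flat R (↥(LinearMap.range α) ⊗[R] ↥(LinearMap.range α))) := by
  refine ⟨?_, ?_⟩
  · intro J hJ hF
    have hq := isQuasiIdeal_idealMul R J
    have hr : LinearMap.range (idealMul R J) = J := (range_idealMul R J).trans hJ
    have htop : ∀ n : ↥J ⊗[R] ↥J, n ∈ (LinearMap.range (idealMul R J) : Ideal R) •
        (⊤ : Submodule R (↥J ⊗[R] ↥J)) := by
      rw [hr]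
      intro n
      induction n with
      | zero => exact zero_mem _
      | add x y hx hy => exact add_mem hx hy
      | tmul a b =>
        refine Submodule.smul_induction_on (p := fun a => a ⊗ₜ[R] b ∈ J •
          (⊤ : Submodule R (↥J ⊗[R] ↥J))) (mem_smul_top_of_idem R J hJ a) ?_ ?_
        · intro r hr n _
          rw [← TensorProduct.smul_tmul']
          exact Submodule.smul_mem_smul hr trivial
        · intro x y hx hy
          rw [TensorProduct.add_tmul]
          exact add_mem hx hy
    refine ⟨hq, ⟨?_, ?_⟩, hF, hr⟩
    · have hb := rTensor_bij R _ (↥J ⊗[R] ↥J) _ hq htop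
      have hi := Module.Flat.rTensor_preserves_injective_linearMap (M := ↥J ⊗[R] ↥J)
        (LinearMap.range (idealMul R J)).subtype Subtype.val_injective
      have he : quasiIdealMul R (↥J ⊗[R] ↥J) (idealMul R J) =
          (TensorProduct.lid R (↥J ⊗[R] ↥J)).toLinearMap ∘ₗ
          (LinearMap.rTensor (↥J ⊗[R] ↥J) (LinearMap.range (idealMul R J)).subtype ∘ₗ
          LinearMap.rTensor (↥J ⊗[R] ↥J) (idealMul R J).rangeRestrict) := by
        apply TensorProduct.ext'
        intro x y
        simp [quasiIdealMul]
      rw [he]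
      exact (TensorProduct.lid R (↥J ⊗[R] ↥J)).injective.comp (hi.comp hb.1)
    · intro n
      refine Submodule.smul_induction_on (p := fun n => ∃ a,
        quasiIdealMul R (↥J ⊗[R] ↥J) (idealMul R J) a = n) (htop n) ?_ ?_
      · rintro r ⟨y, rfl⟩ n -
        exact ⟨y ⊗ₜ n, rfl⟩
      · rintro _ _ ⟨x, rfl⟩ ⟨y, rfl⟩
        exact ⟨x + y, map_add _ _ _⟩
  · intro M _ _ α hq hμ hF
    have htop : ∀ n : M, n ∈ (LinearMap.range α : Ideal R) • (⊤ : Submodule R M) := by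
      intro n
      obtain ⟨x, rfl⟩ := hμ.2 n
      exact quasiIdealMul_mem R M α x
    have hJ : LinearMap.range α * LinearMap.range α = LinearMap.range α := by
      have h1 : (LinearMap.range α : Ideal R) • (⊤ : Submodule R M) = ⊤ :=
        eq_top_iff.mpr fun n _ => htop n
      have h2 := congrArg (Submodule.map α) h1
      rw [Submodule.map_smul'', Submodule.map_top, smul_eq_mul] at h2
      exact h2
    have hb1 := rTensor_bij R M M α hq htop
    have hb2 := rTensor_bij R M (LinearMap.range α) α hq
      (mem_smul_top_of_idem R (LinearMap.range α) hJ)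
    let e1 := LinearEquiv.ofBijective _ hb1
    let e2 := LinearEquiv.ofBijective _ hb2
    let e := e1 ≪≫ₗ TensorProduct.comm R (LinearMap.range α) M ≪≫ₗ e2
    let μ := LinearEquiv.ofBijective _ hμ
    have key : ∀ z : M ⊗[R] M, α (μ z) = idealMul R (LinearMap.range α) (e z) := by
      intro z
      induction z with
      | zero => simp
      | add x y hx hy => simp only [map_add, hx, hy]
      | tmul x y =>
        change α (α x • y) = α y * α x
        rw [map_smul, smul_eq_mul, mul_comm]
    refine ⟨hJ, ⟨e.symm ≪≫ₗ μ, fun x => ?_⟩, Module.Flat.of_linearEquiv (e.symm ≪≫ₗ μ)⟩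
    have := key (e.symm x)
    rw [e.apply_symm_apply] at this
    exact this
end
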